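/- arXiv:1508.02359 — 10 statements merged into one kernel-verified Lean document; each statement's English description precedes it below -/
import Mathlib

section
/- Let λ ∈ [0,1) be fixed. Suppose positive functions Ψ, Ψ₁, Υ are defined on (0,∞), with Ψ₁ monotone decreasing, satisfying ∫₀^∞ (1+ω)Υ(ω) dω < ∞, and suppose there exist constants C₁, C₂ > 0 such that Ψ(ω)·∫_{λω}^∞ Υ(ω') dω' ≤ C₁ Ψ₁(ω) and ∫₀^{λω} ω' Ψ₁(ω−ω') Υ(ω') dω' ≤ C₂ Ψ₁(ω) for all ω > 0. Let ψ : (0,∞) → ℂ be differentiable and υ : ℝ → ℂ be continuous, with |υ(ω)| ≤ C₃ Υ(|ω|) for all ω ∈ ℝ, and suppose there is ω₀ ≥ 0 such that |ψ(ω)| ≤ C₄ Ψ(ω) and |ψ'(ω)| ≤ C₅ Ψ₁(ω) for all ω > ω₀. Then there exists a constant C > 0 such that |∫_{−λω}^∞ ψ(ω+ω') υ(ω') dω' − ψ(ω)·∫_{−∞}^∞ υ(ω') dω'| ≤ C Ψ₁(ω) for all ω > ω₀/(1−λ). -/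
open MeasureTheory Real Set

/-!
Write `a = λω` and `F x = (ψ (ω + x) - ψ ω) υ x`. The quantity to be bounded is
`∫_{-a}^0 F + ∫_0^∞ F - ψ ω ∫_{-∞}^{-a} υ`, and each of the three terms is `O(Ψ₁ ω)`:

* by the mean value inequality and the monotonicity of `Ψ₁` (`norm_sub_le_of_deriv_bound`),
  `‖F x‖ ≤ C₅ C₃ Ψ₁ ω · x Υ x` for `x > 0`, and `x Υ x` is integrable;
* for the same reason `‖F (-s)‖ ≤ C₅ C₃ · s Ψ₁ (ω - s) Υ s` for `0 < s < a`, whose integral is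
  controlled by the second convolution hypothesis; here `ω - s > (1 - λ) ω > ω₀`;
* `‖ψ ω‖ ≤ C₄ Ψ ω` and `‖υ (-s)‖ ≤ C₃ Υ s`, so the tail is controlled by the first convolution
  hypothesis.
-/

/-- Mean value inequality for a derivative dominated by a decreasing function: the increment over
`[u, v]` is controlled by the value of the dominating function at the left end point. -/
lemma norm_sub_le_of_deriv_bound {Ψ₁ : ℝ → ℝ} {ψ ψ' : ℝ → ℂ} {C₅ ω₀ u v : ℝ}
    (hΨ₁mono : ∀ ω ω' : ℝ, 0 < ω → ω ≤ ω' → Ψ₁ ω' ≤ Ψ₁ ω) (hC₅ : 0 < C₅)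
    (hψ : ∀ ω : ℝ, 0 < ω → HasDerivAt ψ (ψ' ω) ω)
    (hω₀ : 0 ≤ ω₀) (hψ'b : ∀ ω : ℝ, ω₀ < ω → ‖ψ' ω‖ ≤ C₅ * Ψ₁ ω)
    (hu : ω₀ < u) (huv : u ≤ v) :
    ‖ψ v - ψ u‖ ≤ C₅ * Ψ₁ u * (v - u) := by
  have h := (convex_Icc u v).norm_image_sub_le_of_norm_hasDerivWithin_le (f := ψ) (f' := ψ')
    (C := C₅ * Ψ₁ u)
    (fun x hx => (hψ x (by linarith [hx.1])).hasDerivWithinAt)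
    (fun x hx => (hψ'b x (by linarith [hx.1])).trans
      (mul_le_mul_of_nonneg_left (hΨ₁mono u x (by linarith) hx.1) hC₅.le))
    (left_mem_Icc.2 huv) (right_mem_Icc.2 huv)
  rwa [Real.norm_of_nonneg (sub_nonneg.2 huv)] at h

/-- Lemma (integral estimates, first part): under convolution-type hypotheses on the
positive comparison functions `Ψ, Ψ₁, Υ`, the integral `∫_{-λω}^∞ ψ(ω+ω') υ(ω') dω'`
equals `ψ(ω) ∫ υ` up to an error of order `Ψ₁(ω)`. -/
theorem stmt_0
    (lam : ℝ) (hlam0 : 0 ≤ lam) (hlam1 : lam < 1)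
    (Ψ Ψ₁ Υ : ℝ → ℝ)
    (hΨpos : ∀ ω : ℝ, 0 < ω → 0 < Ψ ω)
    (hΨ₁pos : ∀ ω : ℝ, 0 < ω → 0 < Ψ₁ ω)
    (hΥpos : ∀ ω : ℝ, 0 < ω → 0 < Υ ω)
    (hΨ₁mono : ∀ ω ω' : ℝ, 0 < ω → ω ≤ ω' → Ψ₁ ω' ≤ Ψ₁ ω)
    (hΥint : IntegrableOn (fun ω => (1 + ω) * Υ ω) (Ioi (0:ℝ)))
    (C₁ C₂ C₃ C₄ C₅ : ℝ)
    (hC₁ : 0 < C₁) (hC₂ : 0 < C₂) (hC₃ : 0 < C₃) (hC₄ : 0 < C₄) (hC₅ : 0 < C₅)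
    (h1 : ∀ ω : ℝ, 0 < ω → Ψ ω * (∫ ω' in Ioi (lam * ω), Υ ω') ≤ C₁ * Ψ₁ ω)
    (h2 : ∀ ω : ℝ, 0 < ω →
      (∫ ω' in Ioo (0:ℝ) (lam * ω), ω' * Ψ₁ (ω - ω') * Υ ω') ≤ C₂ * Ψ₁ ω)
    (ψ ψ' : ℝ → ℂ)
    (hψ : ∀ ω : ℝ, 0 < ω → HasDerivAt ψ (ψ' ω) ω)
    (υ : ℝ → ℂ) (hυc : Continuous υ)
    (hυ : ∀ ω : ℝ, ‖υ ω‖ ≤ C₃ * Υ |ω|)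
    (ω₀ : ℝ) (hω₀ : 0 ≤ ω₀)
    (hψb : ∀ ω : ℝ, ω₀ < ω → ‖ψ ω‖ ≤ C₄ * Ψ ω)
    (hψ'b : ∀ ω : ℝ, ω₀ < ω → ‖ψ' ω‖ ≤ C₅ * Ψ₁ ω) :
    ∃ C : ℝ, 0 < C ∧ ∀ ω : ℝ, ω₀ / (1 - lam) < ω →
      ‖(∫ ω' in Ioi (-(lam * ω)), ψ (ω + ω') * υ ω') -
        ψ ω * (∫ ω' : ℝ, υ ω')‖ ≤ C * Ψ₁ ω := by
  -- `Υ` and `x Υ x` are integrable, being `(1 + x) Υ x` times a bounded factor.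
  have hm : AEStronglyMeasurable Υ (volume.restrict (Ioi (0:ℝ))) := by
    have h := (hΥint.aestronglyMeasurable).mul
      ((by fun_prop : Measurable (fun x : ℝ => (1 + x)⁻¹)).aestronglyMeasurable)
    refine h.congr ?_
    filter_upwards [ae_restrict_mem measurableSet_Ioi] with x hx
    have : (1 + x) ≠ 0 := by have : 0 < x := hx; positivity
    simp only [Pi.mul_apply]
    field_simp
  have hΥi : IntegrableOn Υ (Ioi (0:ℝ)) := by
    refine Integrable.mono' hΥint hm ?_
    filter_upwards [ae_restrict_mem measurableSet_Ioi] with x hx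
    have hx : 0 < x := hx
    rw [Real.norm_of_nonneg (hΥpos x hx).le]
    nlinarith [hΥpos x hx, mul_pos hx (hΥpos x hx)]
  have hxΥi : IntegrableOn (fun x => x * Υ x) (Ioi (0:ℝ)) := by
    refine Integrable.mono' hΥint (measurable_id.aestronglyMeasurable.mul hm) ?_
    filter_upwards [ae_restrict_mem measurableSet_Ioi] with x hx
    have hx : 0 < x := hx
    rw [Real.norm_of_nonneg (mul_pos hx (hΥpos x hx)).le]
    nlinarith [hΥpos x hx]
  have hυi : Integrable υ := by
    have h : Integrable (fun x : ℝ => C₃ * Υ |x|) := by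
      have hpos : IntegrableOn (fun x : ℝ => Υ |x|) (Ioi 0) :=
        hΥi.congr_fun (fun x hx => by rw [abs_of_pos hx]) measurableSet_Ioi
      have hneg : IntegrableOn (fun x : ℝ => Υ |x|) (Iic 0) := by
        rw [integrableOn_Iic_iff_integrableOn_Iio, ← neg_zero, ← Set.neg_Ioi, ← Set.image_neg_eq_neg]
        rw [(Measure.measurePreserving_neg (volume : Measure ℝ)).integrableOn_image
          (Homeomorph.neg ℝ).measurableEmbedding]
        exact hpos.congr_fun (fun x _ => by simp) measurableSet_Ioi
      rw [← integrableOn_univ, ← Iic_union_Ioi (a := (0:ℝ))]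
      exact (hneg.union hpos).const_mul C₃
    exact h.mono' hυc.aestronglyMeasurable (Filter.Eventually.of_forall hυ)
  set M := ∫ x in Ioi (0:ℝ), x * Υ x with hM
  have hM0 : 0 ≤ M := setIntegral_nonneg measurableSet_Ioi
    fun x hx => (mul_pos hx (hΥpos x hx)).le
  refine ⟨C₅ * C₃ * C₂ + C₅ * C₃ * M + C₄ * C₃ * C₁, by positivity, fun ω hω => ?_⟩
  have h1l : 0 < 1 - lam := by linarith
  have hω' : ω₀ < ω * (1 - lam) := (div_lt_iff₀ h1l).1 hω
  have hωpos : 0 < ω := lt_of_le_of_lt (div_nonneg hω₀ h1l.le) hω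
  have hP := hΨ₁pos ω hωpos
  have ha1 := h1 ω hωpos
  have ha2 := h2 ω hωpos
  have hωω₀ : ω₀ < ω := by nlinarith
  set a := lam * ω with ha
  have ha0 : 0 ≤ a := by positivity
  have haω : ω₀ < ω - a := by rw [ha]; linarith
  set F : ℝ → ℂ := fun x => (ψ (ω + x) - ψ ω) * υ x with hF
  have hFc : ContinuousOn F (Ici (-a)) := by
    refine ContinuousOn.mul (ContinuousOn.sub ?_ continuousOn_const) hυc.continuousOn
    intro x hx
    have hx : -a ≤ x := hx
    have h := (hψ (ω + x) (by linarith)).continuousAt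
    exact (ContinuousAt.comp (f := fun x => ω + x) h (by fun_prop)).continuousWithinAt
  have hMV : ∀ u v, ω₀ < u → u ≤ v → ‖ψ v - ψ u‖ ≤ C₅ * Ψ₁ u * (v - u) := fun u v hu huv =>
    norm_sub_le_of_deriv_bound hΨ₁mono hC₅ hψ hω₀ hψ'b hu huv
  have hb2 : ∀ᵐ x ∂(volume.restrict (Ioi (0:ℝ))), ‖F x‖ ≤ C₅ * C₃ * Ψ₁ ω * (x * Υ x) := by
    filter_upwards [ae_restrict_mem measurableSet_Ioi] with x hx
    have hx : 0 < x := hx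
    have e1 := hMV ω (ω + x) hωω₀ (by linarith)
    have e2 := hυ x
    rw [abs_of_pos hx] at e2
    calc ‖F x‖ = ‖ψ (ω + x) - ψ ω‖ * ‖υ x‖ := norm_mul _ _
      _ ≤ (C₅ * Ψ₁ ω * (ω + x - ω)) * (C₃ * Υ x) := by gcongr; exact (norm_nonneg _).trans e1
      _ = _ := by ring
  have hF2 : IntegrableOn F (Ioi 0) :=
    Integrable.mono' (hxΥi.const_mul _)
      ((hFc.mono (fun x hx => by
        have hx : 0 < x := hx
        exact (by linarith : -a ≤ x))).aestronglyMeasurable measurableSet_Ioi) hb2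
  have hF1 : IntegrableOn F (Ioc (-a) 0) :=
    ((hFc.mono Icc_subset_Ici_self).integrableOn_Icc).mono_set Ioc_subset_Icc_self
  have hT2 : ‖∫ x in Ioi 0, F x‖ ≤ C₅ * C₃ * M * Ψ₁ ω := by
    refine (norm_integral_le_of_norm_le (hxΥi.const_mul _) hb2).trans_eq ?_
    rw [integral_const_mul]
    ring
  -- The integrability of the majorant is not part of the hypotheses: it holds because
  -- `Ψ₁ (ω - s) ≤ Ψ₁ (ω - a)` for `s < a`.
  have hG : IntegrableOn (fun s => s * Ψ₁ (ω - s) * Υ s) (Ioo 0 a) := by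
    have hmono : MonotoneOn (fun s => Ψ₁ (ω - s)) (Ioo 0 a) := fun s hs t ht hst =>
      hΨ₁mono _ _ (by linarith [ht.2]) (by linarith)
    have hsub : Ioo 0 a ⊆ Ioi 0 := Ioo_subset_Ioi_self
    refine Integrable.mono' ((hxΥi.mono_set hsub).const_mul (Ψ₁ (ω - a)))
      ((measurable_id.aestronglyMeasurable.mul
        (aemeasurable_restrict_of_monotoneOn measurableSet_Ioo hmono).aestronglyMeasurable).mul
        (hm.mono_measure (Measure.restrict_mono hsub le_rfl))) ?_
    filter_upwards [ae_restrict_mem measurableSet_Ioo] with s hs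
    have hs0 := hs.1
    have e1 := hΨ₁mono (ω - a) (ω - s) (by linarith) (by linarith [hs.2])
    have e2 := hΨ₁pos (ω - s) (by linarith [hs.2])
    have e3 := hΥpos s hs.1
    rw [Real.norm_of_nonneg (by positivity)]
    calc s * Ψ₁ (ω - s) * Υ s = Ψ₁ (ω - s) * (s * Υ s) := by ring
      _ ≤ _ := by gcongr
  have hT1 : ‖∫ x in Ioc (-a) 0, F x‖ ≤ C₅ * C₃ * C₂ * Ψ₁ ω := by
    have hrefl : ∫ x in Ioc (-a) 0, F x = ∫ s in Ioo 0 a, F (-s) := by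
      rw [← intervalIntegral.integral_of_le (by linarith), ← integral_Ioc_eq_integral_Ioo,
        ← intervalIntegral.integral_of_le ha0, intervalIntegral.integral_comp_neg, neg_zero]
    rw [hrefl]
    refine (norm_integral_le_of_norm_le (hG.const_mul (C₅ * C₃)) ?_).trans ?_
    · filter_upwards [ae_restrict_mem measurableSet_Ioo] with s hs
      have e1 := hMV (ω - s) ω (by linarith [hs.2]) (by linarith [hs.1])
      have e2 := hυ (-s)
      rw [abs_neg, abs_of_pos hs.1] at e2
      calc ‖F (-s)‖ = ‖ψ ω - ψ (ω - s)‖ * ‖υ (-s)‖ := by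
            rw [hF, norm_mul, norm_sub_rev, ← sub_eq_add_neg]
        _ ≤ (C₅ * Ψ₁ (ω - s) * (ω - (ω - s))) * (C₃ * Υ s) := by
            gcongr; exact (norm_nonneg _).trans e1
        _ = _ := by ring
    · rw [integral_const_mul]
      calc _ ≤ C₅ * C₃ * (C₂ * Ψ₁ ω) := by gcongr
        _ = _ := by ring
  have hT3 : ‖ψ ω * ∫ x in Iic (-a), υ x‖ ≤ C₄ * C₃ * C₁ * Ψ₁ ω := by
    have e1 := hψb ω hωω₀
    have e2 : ‖∫ x in Iic (-a), υ x‖ ≤ C₃ * ∫ x in Ioi a, Υ x := by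
      rw [← integral_comp_neg_Ioi, ← integral_const_mul]
      refine norm_integral_le_of_norm_le
        ((hΥi.mono_set (Ioi_subset_Ioi ha0)).const_mul C₃) ?_
      filter_upwards [ae_restrict_mem measurableSet_Ioi] with s hs
      have e2 := hυ (-s)
      rwa [abs_neg, abs_of_pos (ha0.trans_lt hs)] at e2
    calc _ = ‖ψ ω‖ * ‖∫ x in Iic (-a), υ x‖ := norm_mul _ _
      _ ≤ (C₄ * Ψ ω) * (C₃ * ∫ x in Ioi a, Υ x) := by
          gcongr; exact (norm_nonneg _).trans e1
      _ = C₄ * C₃ * (Ψ ω * ∫ x in Ioi a, Υ x) := by ring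
      _ ≤ C₄ * C₃ * (C₁ * Ψ₁ ω) := by gcongr
      _ = _ := by ring
  have hunion : Ioc (-a) 0 ∪ Ioi 0 = Ioi (-a) := Ioc_union_Ioi_eq_Ioi (by linarith)
  have hFi : IntegrableOn F (Ioi (-a)) := hunion ▸ hF1.union hF2
  have hsplit : ∫ x in Ioi (-a), F x = (∫ x in Ioc (-a) 0, F x) + ∫ x in Ioi 0, F x := by
    rw [← hunion]
    exact setIntegral_union (Ioc_disjoint_Ioi le_rfl) measurableSet_Ioi hF1 hF2
  have hψυ : ∫ x in Ioi (-a), ψ (ω + x) * υ x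
      = (∫ x in Ioi (-a), F x) + ψ ω * ∫ x in Ioi (-a), υ x := by
    rw [← integral_const_mul, ← integral_add hFi (hυi.integrableOn.const_mul _)]
    refine integral_congr_ae (Filter.Eventually.of_forall fun x => ?_)
    simp only [hF]
    ring
  have hυs : ∫ x, υ x = (∫ x in Iic (-a), υ x) + ∫ x in Ioi (-a), υ x :=
    (intervalIntegral.integral_Iic_add_Ioi hυi.integrableOn hυi.integrableOn).symm
  have hfin : (∫ x in Ioi (-a), ψ (ω + x) * υ x) - ψ ω * ∫ x, υ x
      = (∫ x in Ioc (-a) 0, F x) + (∫ x in Ioi 0, F x) - ψ ω * ∫ x in Iic (-a), υ x := by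
    rw [hψυ, hυs, hsplit]
    ring
  rw [hfin]
  refine (norm_sub_le _ _).trans ?_
  have := norm_add_le (∫ x in Ioc (-a) 0, F x) (∫ x in Ioi 0, F x)
  linarith
end

section
/- Let β > 0, 0 < α < 1, and δ > 0. Let g : ℝ → ℂ be differentiable away from 0 and suppose there are constants A > 0 and ω₀ ≥ 0 such that |g(ω)| ≤ A e^{−β|ω|^α} and |g'(ω)| ≤ A |ω|^{α−1} e^{−β|ω|^α} for all ω ≠ 0. Define I(ω) = (1/2π) ∫_{−ω/2}^∞ g(ω+ω') g(ω') e^{2iδω'} dω' and c = (1/2π) ∫_{−∞}^∞ g(ω') e^{2iδω'} dω'. Then there exists a constant C > 0 such that |I(ω) − c·g(ω)| ≤ C ω^{α−1} e^{−βω^α} for all ω > 0. -/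
open MeasureTheory Real Set

/-!
Write `E(t) = exp(-β|t|^α)`, `K(t) = exp(-β(1-α)|t|^α)` and `e(t) = exp(2iδt)`. Up to the factor
`1/2π`, the difference `I(ω) - c g(ω)` is the integral over the whole line of
`(1_{t > -ω/2} g(ω+t) g(t) - g(ω) g(t)) e(t)`, and this integrand is bounded pointwise by
`2A² ω^{α-1} E(ω) (|t| + |t|^{1-α}) K(t)`, whose integral is a constant times `ω^{α-1} E(ω)`.

For `t > -ω/2` the bound comes from the mean value inequality (`norm_sub_le_of_deriv_bound`). When
`t = -s < 0`, the derivative bound on `[ω-s, ω]` gives `E(ω-s)` instead of `E(ω)`; the concavity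
estimate `ω^α ≤ (ω-s)^α + α s^α` for `s ≤ ω/2` (`rpow_add_le_of_le`) yields
`E(ω-s) E(s) ≤ E(ω) K(s)`. For `t ≤ -ω/2` only `g(ω) g(t)` is left, and
`1 ≤ 2 ω^{α-1} |t|^{1-α}` there.
-/

/-- Bernoulli's inequality improves the subadditivity of `x ↦ x^α` by the factor `α` on the
smaller summand. -/
lemma rpow_add_le_of_le {α s u : ℝ} (hα0 : 0 < α) (hα1 : α < 1) (hs : 0 < s) (hsu : s ≤ u) :
    (u + s) ^ α ≤ u ^ α + α * s ^ α := by
  have hu : 0 < u := hs.trans_le hsu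
  have h1 : (1 + s / u) ^ α ≤ 1 + α * (s / u) :=
    rpow_one_add_le_one_add_mul_self (by have := div_pos hs hu; linarith) hα0.le hα1.le
  have h2 : (u + s) ^ α = u ^ α * (1 + s / u) ^ α := by
    rw [← Real.mul_rpow hu.le (by positivity)]
    congr 1
    field_simp
  have h3 : u ^ (α - 1) ≤ s ^ (α - 1) := rpow_le_rpow_of_nonpos hs hsu (by linarith)
  have h4 : s ^ α = s * s ^ (α - 1) := by
    rw [rpow_sub_one hs.ne']
    field_simp
  have h5 : u ^ α = u * u ^ (α - 1) := by
    rw [rpow_sub_one hu.ne']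
    field_simp
  calc (u + s) ^ α = u ^ α * (1 + s / u) ^ α := h2
    _ ≤ u ^ α * (1 + α * (s / u)) := by gcongr
    _ = u ^ α + α * (s * u ^ (α - 1)) := by
        rw [h5]
        field_simp
    _ ≤ u ^ α + α * s ^ α := by
        rw [h4]
        gcongr

lemma half_rpow_le {α ω : ℝ} (hα0 : 0 < α) (hω : 0 < ω) :
    (ω / 2) ^ (α - 1) ≤ 2 * ω ^ (α - 1) := by
  have h : ((2 : ℝ)⁻¹) ^ (α - 1) ≤ 2 := by
    rw [Real.inv_rpow (by norm_num), ← Real.rpow_neg (by norm_num)]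
    calc (2 : ℝ) ^ (-(α - 1)) ≤ 2 ^ (1 : ℝ) :=
          Real.rpow_le_rpow_of_exponent_le (by norm_num) (by linarith)
      _ = 2 := Real.rpow_one 2
  rw [div_eq_mul_inv, Real.mul_rpow hω.le (by norm_num), mul_comm]
  gcongr

lemma integrable_abs_rpow_mul_exp {α b q : ℝ} (hα0 : 0 < α) (hb : 0 < b) (hq : -1 < q) :
    Integrable (fun t : ℝ => |t| ^ q * Real.exp (-b * |t| ^ α)) := by
  -- The integral is an explicit positive Gamma value, so it is not the junk value `0`.
  apply Integrable.of_integral_ne_zero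
  rw [integral_comp_abs (f := fun x : ℝ => x ^ q * Real.exp (-b * x ^ α)),
    integral_rpow_mul_exp_neg_mul_rpow hα0 hq hb]
  have := Real.Gamma_pos_of_pos (div_pos (by linarith : 0 < q + 1) hα0)
  positivity

lemma norm_sub_le_of_deriv_bound_s2 {β α A : ℝ} (hβ : 0 < β) (hα0 : 0 < α) (hα1 : α < 1)
    (hA : 0 < A) {g g' : ℝ → ℂ} (hg' : ∀ ω : ℝ, ω ≠ 0 → HasDerivAt g (g' ω) ω)
    (hg'b : ∀ ω : ℝ, ω ≠ 0 → ‖g' ω‖ ≤ A * |ω| ^ (α - 1) * Real.exp (-β * |ω| ^ α))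
    {m x y : ℝ} (hm : 0 < m) (hx : m ≤ x) (hy : m ≤ y) :
    ‖g y - g x‖ ≤ A * m ^ (α - 1) * Real.exp (-β * m ^ α) * |y - x| := by
  refine Convex.norm_image_sub_le_of_norm_hasDerivWithin_le (s := Ici m)
    (fun z hz => (hg' z (hm.trans_le hz).ne').hasDerivWithinAt) (fun z hz => ?_)
    (convex_Ici m) hx hy
  have hz0 : 0 < z := hm.trans_le hz
  refine (hg'b z hz0.ne').trans ?_
  rw [abs_of_pos hz0]
  have h1 : z ^ (α - 1) ≤ m ^ (α - 1) := rpow_le_rpow_of_nonpos hm hz (by linarith)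
  have h2 : m ^ α ≤ z ^ α := Real.rpow_le_rpow hm.le hz hα0.le
  have h3 : -β * z ^ α ≤ -β * m ^ α := by nlinarith
  gcongr

/-- The mean value bound on `t > -ω/2`: for negative `t`, part of the decay of `g(t)` pays for
replacing `E(ω+t)` by `E(ω)`. -/
lemma norm_sub_mul_le_near {β α A : ℝ} (hβ : 0 < β) (hα0 : 0 < α) (hα1 : α < 1)
    (hA : 0 < A) {g g' : ℝ → ℂ} (hg' : ∀ ω : ℝ, ω ≠ 0 → HasDerivAt g (g' ω) ω)
    (hgb : ∀ ω : ℝ, ω ≠ 0 → ‖g ω‖ ≤ A * Real.exp (-β * |ω| ^ α))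
    (hg'b : ∀ ω : ℝ, ω ≠ 0 → ‖g' ω‖ ≤ A * |ω| ^ (α - 1) * Real.exp (-β * |ω| ^ α))
    {ω t : ℝ} (hω : 0 < ω) (ht0 : t ≠ 0) (ht : -(ω / 2) < t) :
    ‖(g (ω + t) - g ω) * g t‖ ≤ 2 * A ^ 2 * ω ^ (α - 1) * Real.exp (-β * ω ^ α) *
      (|t| * Real.exp (-(β * (1 - α)) * |t| ^ α)) := by
  obtain ⟨m, hm, hm1, hm2, hmω, hexp⟩ : ∃ m : ℝ, 0 < m ∧ m ≤ ω ∧ m ≤ ω + t ∧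
      m ^ (α - 1) ≤ 2 * ω ^ (α - 1) ∧ ω ^ α + (1 - α) * |t| ^ α ≤ m ^ α + |t| ^ α := by
    rcases lt_or_gt_of_ne ht0 with hneg | hpos
    · refine ⟨ω + t, by linarith, by linarith, le_rfl, ?_, ?_⟩
      · exact (rpow_le_rpow_of_nonpos (by linarith) (by linarith) (by linarith)).trans
          (half_rpow_le hα0 hω)
      · have := rpow_add_le_of_le hα0 hα1 (s := -t) (u := ω + t) (by linarith) (by linarith)
        rw [abs_of_neg hneg]
        rw [add_neg_cancel_right] at this
        linarith
    · refine ⟨ω, hω, le_rfl, by linarith, ?_, ?_⟩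
      · have : 0 < ω ^ (α - 1) := by positivity
        linarith
      · have : 0 ≤ |t| ^ α := by positivity
        nlinarith
  have h1 := norm_sub_le_of_deriv_bound_s2 hβ hα0 hα1 hA hg' hg'b hm hm1 hm2
  have h2 := hgb t ht0
  rw [add_sub_cancel_left] at h1
  rw [norm_mul]
  calc ‖g (ω + t) - g ω‖ * ‖g t‖
      ≤ (A * m ^ (α - 1) * Real.exp (-β * m ^ α) * |t|) * (A * Real.exp (-β * |t| ^ α)) := by
        gcongr
    _ = A ^ 2 * m ^ (α - 1) * |t| * Real.exp (-β * (m ^ α + |t| ^ α)) := by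
        rw [mul_add, Real.exp_add]
        ring
    _ ≤ A ^ 2 * (2 * ω ^ (α - 1)) * |t| *
        Real.exp (-β * (ω ^ α + (1 - α) * |t| ^ α)) := by
        have h3 : -β * (m ^ α + |t| ^ α) ≤ -β * (ω ^ α + (1 - α) * |t| ^ α) := by nlinarith
        gcongr
    _ = _ := by
        rw [show -β * (ω ^ α + (1 - α) * |t| ^ α) =
          -β * ω ^ α + -(β * (1 - α)) * |t| ^ α by ring, Real.exp_add]
        ring

/-- On `t ≤ -ω/2` the factor `ω^{α-1}` is bought with the weight `|t|^{1-α}`. -/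
lemma norm_mul_le_far {β α A : ℝ} (hβ : 0 < β) (hα0 : 0 < α) (hα1 : α < 1)
    (hA : 0 < A) {g : ℝ → ℂ}
    (hgb : ∀ ω : ℝ, ω ≠ 0 → ‖g ω‖ ≤ A * Real.exp (-β * |ω| ^ α))
    {ω t : ℝ} (hω : 0 < ω) (ht : t ≤ -(ω / 2)) :
    ‖g ω * g t‖ ≤ 2 * A ^ 2 * ω ^ (α - 1) * Real.exp (-β * ω ^ α) *
      (|t| ^ (1 - α) * Real.exp (-(β * (1 - α)) * |t| ^ α)) := by
  have ht0 : t < 0 := by linarith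
  have hs : 0 < |t| := abs_pos.mpr ht0.ne
  have hst : ω / 2 ≤ |t| := by
    rw [abs_of_neg ht0]
    linarith
  have h1 := hgb ω hω.ne'
  rw [abs_of_pos hω] at h1
  have h2 := hgb t ht0.ne
  have h3 : 1 ≤ 2 * ω ^ (α - 1) * |t| ^ (1 - α) := by
    calc (1 : ℝ) = |t| ^ (α - 1) * |t| ^ (1 - α) := by
          rw [← Real.rpow_add hs]
          simp
      _ ≤ 2 * ω ^ (α - 1) * |t| ^ (1 - α) := by
          gcongr
          exact (rpow_le_rpow_of_nonpos (by linarith) hst (by linarith)).trans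
            (half_rpow_le hα0 hω)
  have h4 : -β * |t| ^ α ≤ -(β * (1 - α)) * |t| ^ α := by
    have : 0 ≤ β * α * |t| ^ α := by positivity
    linarith
  rw [norm_mul]
  calc ‖g ω‖ * ‖g t‖ ≤ (A * Real.exp (-β * ω ^ α)) * (A * Real.exp (-(β * (1 - α)) * |t| ^ α)) := by
        gcongr
        exact h2.trans (by gcongr)
    _ = 1 * (A ^ 2 * Real.exp (-β * ω ^ α) * Real.exp (-(β * (1 - α)) * |t| ^ α)) := by ring
    _ ≤ (2 * ω ^ (α - 1) * |t| ^ (1 - α)) *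
        (A ^ 2 * Real.exp (-β * ω ^ α) * Real.exp (-(β * (1 - α)) * |t| ^ α)) := by gcongr
    _ = _ := by ring

/-- Theorem (estimate on `I(ω)`): if `g` decays like `e^{-β|ω|^α}` and its derivative like
`|ω|^{α-1} e^{-β|ω|^α}`, then `I(ω) = (1/2π) ∫_{-ω/2}^∞ g(ω+ω') g(ω') e^{2iδω'} dω'`
satisfies `I(ω) = c g(ω) + O(ω^{α-1} e^{-βω^α})` where
`c = (1/2π) ∫ g(ω') e^{2iδω'} dω'`. -/
theorem stmt_2
    (β α δ : ℝ) (hβ : 0 < β) (hα0 : 0 < α) (hα1 : α < 1) (hδ : 0 < δ)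
    (g g' : ℝ → ℂ)
    (hg' : ∀ ω : ℝ, ω ≠ 0 → HasDerivAt g (g' ω) ω)
    (A : ℝ) (hA : 0 < A) (ω₀ : ℝ) (hω₀ : 0 ≤ ω₀)
    (hgb : ∀ ω : ℝ, ω ≠ 0 → ‖g ω‖ ≤ A * Real.exp (-β * |ω| ^ α))
    (hg'b : ∀ ω : ℝ, ω ≠ 0 →
      ‖g' ω‖ ≤ A * |ω| ^ (α - 1) * Real.exp (-β * |ω| ^ α)) :
    ∃ C : ℝ, 0 < C ∧ ∀ ω : ℝ, 0 < ω →
      ‖((2 * π : ℝ) : ℂ)⁻¹ *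
          (∫ ω' in Ioi (-(ω / 2)),
            g (ω + ω') * g ω' * Complex.exp (((2 * δ * ω' : ℝ) : ℂ) * Complex.I)) -
        (((2 * π : ℝ) : ℂ)⁻¹ *
          (∫ ω' : ℝ, g ω' * Complex.exp (((2 * δ * ω' : ℝ) : ℂ) * Complex.I))) * g ω‖
        ≤ C * ω ^ (α - 1) * Real.exp (-β * ω ^ α) := by
  set e : ℝ → ℂ := fun t => Complex.exp (((2 * δ * t : ℝ) : ℂ) * Complex.I) with he
  have hen : ∀ t, ‖e t‖ = 1 := fun t => Complex.norm_exp_ofReal_mul_I _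
  have hem : Measurable e := by fun_prop
  have hgm : Measurable g := measurable_of_continuousOn_compl_singleton 0
    fun t ht => (hg' t ht).continuousAt.continuousWithinAt
  set W : ℝ → ℝ := fun t => |t| ^ (1 : ℝ) * Real.exp (-(β * (1 - α)) * |t| ^ α) +
    |t| ^ (1 - α) * Real.exp (-(β * (1 - α)) * |t| ^ α) with hW
  have hb : 0 < β * (1 - α) := mul_pos hβ (by linarith)
  have hWint : Integrable W := (integrable_abs_rpow_mul_exp hα0 hb (by norm_num)).add
    (integrable_abs_rpow_mul_exp hα0 hb (by linarith))
  have hW0 : 0 ≤ ∫ t, W t := integral_nonneg fun t => by positivity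
  have hne : ∀ a : ℝ, ∀ᵐ t : ℝ, t ≠ a := fun a => by
    simp [ae_iff, measure_singleton]
  have hge : Integrable (fun t => g t * e t) := by
    refine Integrable.mono' ((integrable_abs_rpow_mul_exp hα0 hβ (q := 0)
      (by norm_num)).const_mul A) (hgm.mul hem).aestronglyMeasurable ?_
    filter_upwards [hne 0] with t ht
    simpa [hen] using hgb t ht
  refine ⟨(2 * π)⁻¹ * (2 * A ^ 2 * (∫ t, W t)) + 1, by positivity, fun ω hω => ?_⟩
  set M : ℝ := 2 * A ^ 2 * ω ^ (α - 1) * Real.exp (-β * ω ^ α) with hM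
  have hM0 : 0 ≤ M := by positivity
  have hgge : Integrable (fun t => g (ω + t) * g t * e t) := by
    simp_rw [mul_assoc]
    refine hge.bdd_mul (c := A) (hgm.comp (measurable_const_add ω)).aestronglyMeasurable ?_
    filter_upwards [hne (-ω)] with t ht
    refine (hgb _ fun h => ht (by linarith)).trans ?_
    refine mul_le_of_le_one_right hA.le (Real.exp_le_one_iff.mpr ?_)
    have : 0 ≤ β * |ω + t| ^ α := by positivity
    linarith
  have hkey : ‖(∫ t in Ioi (-(ω / 2)), g (ω + t) * g t * e t) - (∫ t, g t * e t) * g ω‖ ≤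
      M * ∫ t, W t := by
    rw [← integral_indicator measurableSet_Ioi, ← integral_mul_const,
      ← integral_sub (hgge.indicator measurableSet_Ioi) (hge.mul_const _), ← integral_const_mul]
    refine norm_integral_le_of_norm_le (hWint.const_mul M) ?_
    filter_upwards [hne 0] with t ht
    by_cases hmem : t ∈ Ioi (-(ω / 2))
    · rw [indicator_of_mem hmem, show g (ω + t) * g t * e t - g t * e t * g ω =
        (g (ω + t) - g ω) * g t * e t by ring, norm_mul, hen, mul_one]
      refine (norm_sub_mul_le_near hβ hα0 hα1 hA hg' hgb hg'b hω ht hmem).trans ?_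
      rw [← hM]
      refine mul_le_mul_of_nonneg_left ?_ hM0
      simp only [hW, Real.rpow_one]
      exact le_add_of_nonneg_right (by positivity)
    · rw [indicator_of_notMem hmem, zero_sub, norm_neg, show g t * e t * g ω =
        g ω * g t * e t by ring, norm_mul, hen, mul_one]
      refine (norm_mul_le_far hβ hα0 hα1 hA hgb hω (not_lt.mp hmem)).trans ?_
      rw [← hM]
      refine mul_le_mul_of_nonneg_left ?_ hM0
      exact le_add_of_nonneg_left (by positivity)
  rw [mul_assoc, ← mul_sub, norm_mul, norm_inv, Complex.norm_real, Real.norm_of_nonneg (by positivity)]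
  calc (2 * π)⁻¹ * ‖(∫ t in Ioi (-(ω / 2)), g (ω + t) * g t * e t) - (∫ t, g t * e t) * g ω‖
      ≤ (2 * π)⁻¹ * (M * ∫ t, W t) := by gcongr
    _ = (2 * π)⁻¹ * (2 * A ^ 2 * (∫ t, W t)) * (ω ^ (α - 1) * Real.exp (-β * ω ^ α)) := by
        rw [hM]
        ring
    _ ≤ ((2 * π)⁻¹ * (2 * A ^ 2 * (∫ t, W t)) + 1) * (ω ^ (α - 1) * Real.exp (-β * ω ^ α)) := by
        gcongr
        linarith
    _ = _ := by ring
end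

section
/- Let β > 0, 0 < α < 1, and δ > 0. Let g : ℝ → ℂ be twice differentiable away from 0 and suppose there are constants A > 0 and ω₀ ≥ 0 such that |g(ω)| ≤ A e^{−β|ω|^α} and |g'(ω)| ≤ A |ω|^{α−1} e^{−β|ω|^α} for all ω ≠ 0, and |g''(ω)| ≤ A |ω|^{α−2} e^{−β|ω|^α} for |ω| > ω₀. Define I(ω) = (1/2π) ∫_{−ω/2}^∞ g(ω+ω') g(ω') e^{2iδω'} dω' and c = (1/2π) ∫_{−∞}^∞ g(ω') e^{2iδω'} dω'. Then there exists a constant C > 0 such that |I'(ω) − c·g'(ω)| ≤ C ω^{α−2} e^{−βω^α} for all ω > 2ω₀ (with ω > 0 in case ω₀ = 0). -/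
open MeasureTheory Real Set

/-!
Write `k x = g x * exp (2 i δ x)`. Since `ω + x > ω / 2 > 0` on the domain of integration, the
integral `∫_{-ω/2}^∞ g (ω + x) k x dx` may be differentiated under the integral sign, and the moving
lower limit adds a boundary term (`hasDerivAt_integral_moving`). Up to the factor `1 / 2π`, the
difference `I' ω - c * g' ω` is therefore the sum of three terms.

* `∫_{-ω/2}^∞ (g' (ω + x) - g' ω) k x dx`. By the mean value inequality and the bound on `g''`, the
  increment is at most `A m ^ (α - 2) exp (-β m ^ α) |x|` with `m = min ω (ω + x) > ω / 2`. The
  inequality `ω ^ α ≤ (ω - s) ^ α + α s ^ α` for `s ≤ ω / 2` (`rpow_le_sub_rpow_add`) pulls out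
  `exp (-β ω ^ α)` and leaves the integrable weight `|x| exp (-β (1 - α) |x| ^ α)`
  (`norm_deriv_sub_mul_exp_le`).
* `-g' ω ∫_{-∞}^{-ω/2} k x dx`. Here `1 ≤ 2 |x| / ω`, so the tail integral is `O (1 / ω)`, controlled
  by the same weight.
* The boundary term `g (ω / 2) k (-ω / 2) / 2`, of size `exp (-2 β (ω / 2) ^ α)`. As
  `2 (ω / 2) ^ α = 2 ^ (1 - α) ω ^ α` with `2 ^ (1 - α) > 1`, the surplus exponential decay absorbs
  `ω ^ (2 - α)` (`exists_boundary_bound`).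
-/

lemma integrable_abs_rpow_mul_exp_s3 {p s b : ℝ} (hs : -1 < s) (hp : 0 < p) (hb : 0 < b) :
    Integrable (fun x : ℝ => |x| ^ s * Real.exp (-b * |x| ^ p)) := by
  have h0 : IntegrableOn (fun x : ℝ => |x| ^ s * Real.exp (-b * |x| ^ p)) (Ioi 0) :=
    (integrableOn_rpow_mul_exp_neg_mul_rpow hs hp hb).congr_fun
      (fun x hx => by simp only [abs_of_pos (mem_Ioi.1 hx)]) measurableSet_Ioi
  rw [← integrableOn_univ, ← Iic_union_Ioi (a := (0 : ℝ)), integrableOn_union]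
  refine ⟨?_, h0⟩
  rw [← Measure.map_neg_eq_self (volume : Measure ℝ)]
  let m : MeasurableEmbedding fun x : ℝ => -x := (Homeomorph.neg ℝ).measurableEmbedding
  rw [m.integrableOn_map_iff]
  simp_rw [Function.comp_def, abs_neg, neg_preimage, neg_Iic, neg_zero]
  rw [integrableOn_Ici_iff_integrableOn_Ioi]
  exact h0

/-- A quantitative form of subadditivity of `t ↦ t ^ α`: after writing `ω = t + s` with `s ≤ t`,
Bernoulli's inequality gives `(t + s) ^ α ≤ t ^ α + α s t ^ (α - 1)`, and `t ^ (α - 1) ≤ s ^ (α - 1)`. -/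
lemma rpow_le_sub_rpow_add {α ω s : ℝ} (hα0 : 0 < α) (hα1 : α < 1) (hs : 0 < s)
    (hsω : s ≤ ω / 2) : ω ^ α ≤ (ω - s) ^ α + α * s ^ α := by
  obtain ⟨t, rfl⟩ : ∃ t, ω = t + s := ⟨ω - s, by ring⟩
  have hst : s ≤ t := by linarith
  have ht : 0 < t := hs.trans_le hst
  have h1 : t + s = t * (1 + s / t) := by field_simp
  have h2 : (1 + s / t) ^ α ≤ 1 + α * (s / t) :=
    rpow_one_add_le_one_add_mul_self (by have := div_pos hs ht; linarith) hα0.le hα1.le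
  have h3 : t ^ (α - 1) ≤ s ^ (α - 1) :=
    Real.rpow_le_rpow_of_nonpos hs hst (by linarith)
  have h4 : t ^ (α - 1) * t = t ^ α := by
    rw [Real.rpow_sub_one ht.ne']; field_simp
  have h5 : s ^ (α - 1) * s = s ^ α := by
    rw [Real.rpow_sub_one hs.ne']; field_simp
  have h6 : 0 < t ^ α := by positivity
  calc (t + s) ^ α = t ^ α * (1 + s / t) ^ α := by
        rw [h1, Real.mul_rpow ht.le (by positivity)]
    _ ≤ t ^ α * (1 + α * (s / t)) := by gcongr
    _ = t ^ α + α * (t ^ (α - 1) * s) := by rw [← h4]; field_simp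
    _ ≤ t ^ α + α * (s ^ (α - 1) * s) := by gcongr
    _ = (t + s - s) ^ α + α * s ^ α := by rw [h5]; ring_nf

/-- The boundary term has the size of the error term, because `2 (ω / 2) ^ α` exceeds `ω ^ α` by a
positive multiple of `ω ^ α`. -/
lemma exists_boundary_bound {α β : ℝ} (hβ : 0 < β) (hα0 : 0 < α) (hα1 : α < 1) :
    ∃ K : ℝ, 0 < K ∧ ∀ ω : ℝ, 0 < ω →
      Real.exp (-β * (ω / 2) ^ α) * Real.exp (-β * (ω / 2) ^ α)
        ≤ K * ω ^ (α - 2) * Real.exp (-β * ω ^ α) := by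
  set p : ℝ := (2 - α) / α with hp
  have hp0 : 0 < p := div_pos (by linarith) hα0
  set b : ℝ := β * (2 * (2⁻¹ : ℝ) ^ α - 1) with hb
  have hb0 : 0 < b := by
    have : (2⁻¹ : ℝ) ^ (1 : ℝ) < (2⁻¹ : ℝ) ^ α :=
      Real.rpow_lt_rpow_of_exponent_gt (by norm_num) (by norm_num) hα1
    rw [Real.rpow_one] at this
    exact mul_pos hβ (by linarith)
  refine ⟨(p / b) ^ p, by positivity, fun ω hω => ?_⟩
  have hy : 0 < ω ^ α := by positivity
  -- `t ≤ exp t` at `t = b ω ^ α / p`, raised to the power `p`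
  have h1 : (b * ω ^ α / p) ^ p ≤ Real.exp (b * ω ^ α) := by
    calc (b * ω ^ α / p) ^ p ≤ (Real.exp (b * ω ^ α / p)) ^ p := by
          gcongr
          linarith [Real.add_one_le_exp (b * ω ^ α / p)]
      _ = Real.exp (b * ω ^ α) := by rw [← Real.exp_mul]; field_simp
  have h2 : (ω ^ α) ^ p = ω ^ (2 - α) := by
    rw [← Real.rpow_mul hω.le, hp]; congr 1; field_simp
  have h3 : (p / b) ^ p * (b * ω ^ α / p) ^ p = ω ^ (2 - α) := by
    rw [← h2, ← Real.mul_rpow (by positivity) (by positivity)]; congr 1; field_simp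
  have h4 : ω ^ (2 - α) * ω ^ (α - 2) = 1 := by
    rw [← Real.rpow_add hω]; norm_num
  have h5 : 1 ≤ (p / b) ^ p * ω ^ (α - 2) * Real.exp (b * ω ^ α) := by
    rw [← h4, ← h3]
    have := mul_le_mul_of_nonneg_left h1 (show 0 ≤ (p / b) ^ p * ω ^ (α - 2) by positivity)
    linarith
  have h6 : Real.exp (-β * (ω / 2) ^ α) * Real.exp (-β * (ω / 2) ^ α)
      = Real.exp (-(b * ω ^ α)) * Real.exp (-β * ω ^ α) := by
    rw [← Real.exp_add, ← Real.exp_add, div_eq_mul_inv, Real.mul_rpow hω.le (by norm_num), hb]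
    congr 1; ring
  rw [h6]
  gcongr
  rw [Real.exp_neg, inv_le_iff_one_le_mul₀ (by positivity)]
  exact h5

lemma integrableOn_shift_mul {h k : ℝ → ℂ} {w a B : ℝ} (hc : ContinuousOn h (Ioi (w + a)))
    (hB : ∀ x, w + a < x → ‖h x‖ ≤ B) (hk : Integrable k) :
    IntegrableOn (fun x => h (w + x) * k x) (Ioi a) := by
  refine Integrable.bdd_mul (c := B) hk.integrableOn ?_ ?_
  · refine ContinuousOn.aestronglyMeasurable ?_ measurableSet_Ioi
    exact hc.comp (by fun_prop) fun x hx => by simpa using hx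
  · exact (ae_restrict_mem measurableSet_Ioi).mono fun x hx => hB _ (by simpa using hx)

/-- Leibniz rule for `w ↦ ∫_{-w/2}^∞ f (w + x) k x dx`. The kernel `k` only has to be integrable, and
continuous on the negative axis, where the lower limit moves; the integral is split at the frozen
limit `-ω / 2`. -/
lemma hasDerivAt_integral_moving {f f' k : ℝ → ℂ} {ω B B' : ℝ} (hω : 0 < ω)
    (hf : ∀ x, 0 < x → HasDerivAt f (f' x) x) (hf'c : ContinuousOn f' (Ioi 0))
    (hB : ∀ x, 0 < x → ‖f x‖ ≤ B) (hB' : ∀ x, ω / 4 < x → ‖f' x‖ ≤ B')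
    (hk : Integrable k) (hkc : ContinuousOn k (Iio 0)) :
    IntegrableOn (fun x => f' (ω + x) * k x) (Ioi (-(ω / 2))) ∧
    HasDerivAt (fun w => ∫ x in Ioi (-(w / 2)), f (w + x) * k x)
      ((∫ x in Ioi (-(ω / 2)), f' (ω + x) * k x)
        + (1 / 2 : ℂ) * (f (ω / 2) * k (-(ω / 2)))) ω := by
  have hfc : ContinuousOn f (Ioi 0) := fun x hx => (hf x hx).continuousAt.continuousWithinAt
  have hint : ∀ w a, 0 ≤ w + a → IntegrableOn (fun x => f (w + x) * k x) (Ioi a) :=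
    fun w a hwa => integrableOn_shift_mul (hfc.mono (Ioi_subset_Ioi hwa))
      (fun x hx => hB x (hwa.trans_lt hx)) hk
  have hint' : IntegrableOn (fun x => f' (ω + x) * k x) (Ioi (-(ω / 2))) :=
    integrableOn_shift_mul (hf'c.mono (Ioi_subset_Ioi (by linarith)))
      (fun x hx => hB' x (by linarith)) hk
  have hball : Metric.ball ω (ω / 4) ∈ nhds ω := Metric.ball_mem_nhds _ (by linarith)
  have hfix := hasDerivAt_integral_of_dominated_loc_of_deriv_le
    (μ := volume.restrict (Ioi (-(ω / 2)))) (F := fun w x => f (w + x) * k x)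
    (F' := fun w x => f' (w + x) * k x) (bound := fun x => B' * ‖k x‖) hball
    (by
      filter_upwards [hball] with w hw
      rw [Metric.mem_ball, Real.dist_eq, abs_lt] at hw
      exact (hint w _ (by linarith)).aestronglyMeasurable)
    (hint ω _ (by linarith)) hint'.aestronglyMeasurable
    ((ae_restrict_mem measurableSet_Ioi).mono fun x hx w hw => by
      rw [Metric.mem_ball, Real.dist_eq, abs_lt] at hw
      rw [mem_Ioi] at hx
      rw [norm_mul]
      gcongr
      exact hB' _ (by linarith))
    (hk.norm.const_mul B').integrableOn
    ((ae_restrict_mem measurableSet_Ioi).mono fun x hx w hw => by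
      rw [Metric.mem_ball, Real.dist_eq, abs_lt] at hw
      rw [mem_Ioi] at hx
      exact ((hf (w + x) (by linarith)).comp_add_const w x).mul_const (k x))
  refine ⟨hint', ?_⟩
  -- The strip between the moving and the frozen lower limit has length `|w - ω| / 2`, and the
  -- integrand is uniformly close there to its value at `(ω, -ω / 2)`.
  have hstrip : HasDerivAt (fun w => ∫ x in (-(w / 2))..(-(ω / 2)), f (w + x) * k x)
      ((1 / 2 : ℂ) * (f (ω / 2) * k (-(ω / 2)))) ω := by
    set G0 : ℂ := f (ω / 2) * k (-(ω / 2)) with hG0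
    have hcont : ContinuousAt (fun q : ℝ × ℝ => f (q.1 + q.2) * k q.2) (ω, -(ω / 2)) := by
      have e1 : ContinuousAt f (ω + -(ω / 2)) := (hf _ (by linarith)).continuousAt
      have e2 : ContinuousAt k (-(ω / 2)) := hkc.continuousAt (Iio_mem_nhds (by linarith))
      refine ContinuousAt.mul ?_ ?_
      · exact ContinuousAt.comp (f := fun q : ℝ × ℝ => q.1 + q.2) (x := (ω, -(ω / 2))) e1
          (by fun_prop)
      · exact ContinuousAt.comp (f := fun q : ℝ × ℝ => q.2) (x := (ω, -(ω / 2))) e2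
          (by fun_prop)
    rw [hasDerivAt_iff_isLittleO, Asymptotics.isLittleO_iff]
    intro ε hε
    rw [Metric.continuousAt_iff] at hcont
    obtain ⟨η, hη, hclose⟩ := hcont ε hε
    filter_upwards [hball, Metric.ball_mem_nhds ω hη] with w hw hw2
    rw [Metric.mem_ball, Real.dist_eq] at hw hw2
    have hw' := abs_lt.1 hw
    have hi : IntervalIntegrable (fun x => f (w + x) * k x) volume (-(w / 2)) (-(ω / 2)) := by
      rw [intervalIntegrable_iff]
      refine (hint w (min (-(w / 2)) (-(ω / 2))) ?_).mono_set Ioc_subset_Ioi_self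
      rcases min_choice (-(w / 2)) (-(ω / 2)) with h | h <;> rw [h] <;> linarith
    have e : (∫ x in (-(w / 2))..(-(ω / 2)), f (w + x) * k x) - (w - ω) • ((1 / 2 : ℂ) * G0)
        = ∫ x in (-(w / 2))..(-(ω / 2)), (f (w + x) * k x - G0) := by
      rw [intervalIntegral.integral_sub hi intervalIntegrable_const,
        intervalIntegral.integral_const, Complex.real_smul, Complex.real_smul]
      push_cast; ring
    rw [intervalIntegral.integral_same, sub_zero, e]
    refine (intervalIntegral.norm_integral_le_of_norm_le_const (C := ε) fun x hx => ?_).trans ?_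
    · have hx' : |x - -(ω / 2)| ≤ |w - ω| := by
        rw [mem_uIoc] at hx
        rcases hx with hx | hx <;> rw [abs_le] <;>
          constructor <;> linarith [le_abs_self (w - ω), neg_abs_le (w - ω)]
      have := hclose (x := (w, x)) (by
        rw [Prod.dist_eq, max_lt_iff]
        exact ⟨by simpa [Real.dist_eq] using hw2,
          by rw [Real.dist_eq]; exact hx'.trans_lt hw2⟩)
      rw [dist_eq_norm] at this
      have e3 : ω + -(ω / 2) = ω / 2 := by ring
      simp only [e3] at this
      exact this.le
    · gcongr
      rw [Real.norm_eq_abs, show -(ω / 2) - -(w / 2) = (w - ω) / 2 by ring, abs_div]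
      norm_num
  refine (hfix.2.add hstrip).congr_of_eventuallyEq ?_
  filter_upwards [hball] with w hw
  rw [Metric.mem_ball, Real.dist_eq, abs_lt] at hw
  simp only [Pi.add_apply]
  rw [add_comm, intervalIntegral.integral_interval_add_Ioi (hint w _ (by linarith))
    (hint w _ (by linarith))]

/-- The increment of `g'` between `ω` and `ω + x`, weighted by the decay of `g` at `x`, is bounded by
the target error times an integrable function of `x` that does not depend on `ω`. -/
lemma norm_deriv_sub_mul_exp_le {α β A ω₀ ω x : ℝ} {g' g'' : ℝ → ℂ} (hβ : 0 < β) (hα0 : 0 < α)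
    (hα1 : α < 1) (hA : 0 < A)
    (hg'' : ∀ ω : ℝ, ω ≠ 0 → HasDerivAt g' (g'' ω) ω)
    (hg''b : ∀ ω : ℝ, ω₀ < |ω| →
      ‖g'' ω‖ ≤ A * |ω| ^ (α - 2) * Real.exp (-β * |ω| ^ α))
    (hω : 0 < ω) (hωω₀ : 2 * ω₀ < ω) (hx : -(ω / 2) < x) (hx0 : x ≠ 0) :
    ‖g' (ω + x) - g' ω‖ * Real.exp (-β * |x| ^ α)
      ≤ 4 * A * ω ^ (α - 2) * Real.exp (-β * ω ^ α)
        * (|x| ^ (1 : ℝ) * Real.exp (-(β * (1 - α)) * |x| ^ α)) := by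
  obtain ⟨m, hm2, hmω, hmx, hexp⟩ : ∃ m, ω / 2 < m ∧ m ≤ ω ∧ m ≤ ω + x ∧
      ω ^ α + (1 - α) * |x| ^ α ≤ m ^ α + |x| ^ α := by
    rcases hx0.lt_or_gt with h | h
    -- the witness is `min ω (ω + x)`
    · refine ⟨ω + x, by linarith, by linarith, le_rfl, ?_⟩
      have := rpow_le_sub_rpow_add (ω := ω) (s := -x) hα0 hα1 (by linarith) (by linarith)
      rw [abs_of_neg h]
      rw [sub_neg_eq_add] at this
      linarith
    · refine ⟨ω, by linarith, le_rfl, by linarith, ?_⟩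
      have : 0 ≤ α * |x| ^ α := by positivity
      linarith
  have hm : 0 < m := by linarith
  -- both `ω` and `ω + x` lie in `[m, ∞)`, where the bound on the second derivative is largest at `m`
  have hmvt : ‖g' (ω + x) - g' ω‖ ≤ A * m ^ (α - 2) * Real.exp (-β * m ^ α) * ‖ω + x - ω‖ := by
    refine Convex.norm_image_sub_le_of_norm_hasDerivWithin_le (s := Ici m) (f' := g'')
      (fun y hy => (hg'' y ?_).hasDerivWithinAt) (fun y hy => ?_) (convex_Ici m) hmω hmx
    · exact (hm.trans_le hy).ne'
    · have hmy : m ≤ y := hy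
      have hy0 : 0 < y := hm.trans_le hmy
      have h := hg''b y (by rw [abs_of_pos hy0]; linarith)
      rw [abs_of_pos hy0] at h
      have e1 : y ^ (α - 2) ≤ m ^ (α - 2) :=
        Real.rpow_le_rpow_of_nonpos hm hmy (by linarith)
      have e2 : m ^ α ≤ y ^ α := Real.rpow_le_rpow hm.le hmy hα0.le
      have e3 : -β * y ^ α ≤ -β * m ^ α := by nlinarith
      refine h.trans ?_
      gcongr
  have hpow : m ^ (α - 2) ≤ 4 * ω ^ (α - 2) := by
    have e1 : m ^ (α - 2) ≤ (ω / 2) ^ (α - 2) :=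
      Real.rpow_le_rpow_of_nonpos (by positivity) hm2.le (by linarith)
    have e2 : (ω / 2) ^ (α - 2) = ω ^ (α - 2) * 2 ^ (2 - α) := by
      rw [Real.div_rpow hω.le (by norm_num), div_eq_mul_inv, ← Real.rpow_neg (by norm_num)]
      congr 2; ring
    have e3 : (2 : ℝ) ^ (2 - α) ≤ 4 := by
      calc (2 : ℝ) ^ (2 - α) ≤ (2 : ℝ) ^ (2 : ℝ) :=
            Real.rpow_le_rpow_of_exponent_le (by norm_num) (by linarith)
        _ = 4 := by norm_num
    have : 0 < ω ^ (α - 2) := by positivity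
    nlinarith
  have hE : Real.exp (-β * m ^ α) * Real.exp (-β * |x| ^ α)
      ≤ Real.exp (-β * ω ^ α) * Real.exp (-(β * (1 - α)) * |x| ^ α) := by
    rw [← Real.exp_add, ← Real.exp_add]
    apply Real.exp_le_exp.2
    nlinarith
  rw [add_sub_cancel_left, Real.norm_eq_abs] at hmvt
  calc ‖g' (ω + x) - g' ω‖ * Real.exp (-β * |x| ^ α)
      ≤ (A * m ^ (α - 2) * Real.exp (-β * m ^ α) * |x|) * Real.exp (-β * |x| ^ α) := by gcongr
    _ = A * m ^ (α - 2) * |x| * (Real.exp (-β * m ^ α) * Real.exp (-β * |x| ^ α)) := by ring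
    _ ≤ A * (4 * ω ^ (α - 2)) * |x|
        * (Real.exp (-β * ω ^ α) * Real.exp (-(β * (1 - α)) * |x| ^ α)) := by gcongr
    _ = _ := by rw [Real.rpow_one]; ring

lemma integrable_of_exp_bound {α β A : ℝ} {k : ℝ → ℂ} (hβ : 0 < β) (hα0 : 0 < α)
    (hkc : ContinuousOn k {0}ᶜ)
    (hkb : ∀ x : ℝ, x ≠ 0 → ‖k x‖ ≤ A * Real.exp (-β * |x| ^ α)) : Integrable k := by
  have h0 : ∀ᵐ x : ℝ, x ≠ 0 := Measure.ae_ne volume 0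
  have hmeas : AEStronglyMeasurable k volume := by
    have := hkc.aestronglyMeasurable (μ := volume) (measurableSet_singleton (0 : ℝ)).compl
    rwa [restrict_compl_singleton] at this
  have hb : Integrable (fun x : ℝ => A * Real.exp (-β * |x| ^ α)) := by
    have := (integrable_abs_rpow_mul_exp_s3 (s := 0) (by norm_num) hα0 hβ).const_mul A
    simpa using this
  exact hb.mono' hmeas (h0.mono fun x hx => hkb x hx)

/-- Theorem (estimate on `I'(ω)`): if `g` decays like `e^{-β|ω|^α}`, `g'` like
`|ω|^{α-1} e^{-β|ω|^α}`, and `g''` like `|ω|^{α-2} e^{-β|ω|^α}` for `|ω| > ω₀`, then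
`I(ω) = (1/2π) ∫_{-ω/2}^∞ g(ω+ω') g(ω') e^{2iδω'} dω'` is differentiable with
`I'(ω) = c g'(ω) + O(ω^{α-2} e^{-βω^α})` for `ω > 2ω₀` (with `ω > 0` if `ω₀ = 0`),
where `c = (1/2π) ∫ g(ω') e^{2iδω'} dω'`. -/
theorem stmt_3
    (β α δ : ℝ) (hβ : 0 < β) (hα0 : 0 < α) (hα1 : α < 1) (hδ : 0 < δ)
    (g g' g'' : ℝ → ℂ)
    (hg' : ∀ ω : ℝ, ω ≠ 0 → HasDerivAt g (g' ω) ω)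
    (hg'' : ∀ ω : ℝ, ω ≠ 0 → HasDerivAt g' (g'' ω) ω)
    (A : ℝ) (hA : 0 < A) (ω₀ : ℝ) (hω₀ : 0 ≤ ω₀)
    (hgb : ∀ ω : ℝ, ω ≠ 0 → ‖g ω‖ ≤ A * Real.exp (-β * |ω| ^ α))
    (hg'b : ∀ ω : ℝ, ω ≠ 0 →
      ‖g' ω‖ ≤ A * |ω| ^ (α - 1) * Real.exp (-β * |ω| ^ α))
    (hg''b : ∀ ω : ℝ, ω₀ < |ω| →
      ‖g'' ω‖ ≤ A * |ω| ^ (α - 2) * Real.exp (-β * |ω| ^ α)) :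
    ∃ C : ℝ, 0 < C ∧ ∀ ω : ℝ, 2 * ω₀ < ω → 0 < ω → ∃ d : ℂ,
      HasDerivAt (fun w : ℝ => ((2 * π : ℝ) : ℂ)⁻¹ *
          (∫ ω' in Ioi (-(w / 2)),
            g (w + ω') * g ω' * Complex.exp (((2 * δ * ω' : ℝ) : ℂ) * Complex.I))) d ω ∧
      ‖d - (((2 * π : ℝ) : ℂ)⁻¹ *
          (∫ ω' : ℝ, g ω' * Complex.exp (((2 * δ * ω' : ℝ) : ℂ) * Complex.I))) * g' ω‖
        ≤ C * ω ^ (α - 2) * Real.exp (-β * ω ^ α) := by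
  set k : ℝ → ℂ := fun x => g x * Complex.exp (((2 * δ * x : ℝ) : ℂ) * Complex.I) with hk
  have hknorm : ∀ x, ‖k x‖ = ‖g x‖ := fun x => by
    simp only [hk, norm_mul, Complex.norm_exp_ofReal_mul_I, mul_one]
  have hkb : ∀ x : ℝ, x ≠ 0 → ‖k x‖ ≤ A * Real.exp (-β * |x| ^ α) := fun x hx => by
    rw [hknorm]; exact hgb x hx
  have hkc : ContinuousOn k {0}ᶜ := by
    have h1 : ContinuousOn g {0}ᶜ := fun x hx => (hg' x hx).continuousAt.continuousWithinAt
    exact h1.mul (by fun_prop)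
  have hkint : Integrable k := integrable_of_exp_bound hβ hα0 hkc hkb
  have h0 : ∀ᵐ x : ℝ, x ≠ 0 := Measure.ae_ne volume 0
  have hβα : 0 < β * (1 - α) := mul_pos hβ (by linarith)
  set ψ : ℝ → ℝ := fun x => |x| ^ (1 : ℝ) * Real.exp (-(β * (1 - α)) * |x| ^ α) with hψ
  have hψint : Integrable ψ := integrable_abs_rpow_mul_exp_s3 (by norm_num) hα0 hβα
  have hψ0 : ∀ x, 0 ≤ ψ x := fun x => by positivity
  set M : ℝ := ∫ x, ψ x with hM
  have hM0 : 0 ≤ M := integral_nonneg hψ0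
  obtain ⟨K, hK0, hK⟩ := exists_boundary_bound hβ hα0 hα1
  refine ⟨6 * A ^ 2 * M + A ^ 2 * K, by positivity, fun ω hωω₀ hω => ?_⟩
  set E : ℝ := ω ^ (α - 2) * Real.exp (-β * ω ^ α) with hE
  have hE0 : 0 < E := by positivity
  have hexp1 : ∀ x : ℝ, Real.exp (-β * |x| ^ α) ≤ 1 := fun x => by
    rw [Real.exp_le_one_iff]
    have : 0 ≤ |x| ^ α := by positivity
    nlinarith
  obtain ⟨hint', hder⟩ := hasDerivAt_integral_moving (f := g) (f' := g') (k := k) (B := A)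
    (B' := A * (ω / 4) ^ (α - 1)) hω (fun x hx => hg' x hx.ne')
    (fun x hx => (hg'' x (ne_of_gt hx)).continuousAt.continuousWithinAt)
    (fun x hx => (hgb x hx.ne').trans (mul_le_of_le_one_right hA.le (hexp1 x)))
    (fun x hx => by
      have hx0 : 0 < x := by linarith
      refine (hg'b x hx0.ne').trans ((mul_le_of_le_one_right (by positivity) (hexp1 x)).trans ?_)
      rw [abs_of_pos hx0]
      gcongr ?_ * ?_
      exact Real.rpow_le_rpow_of_nonpos (by positivity) hx.le (by linarith))
    hkint (hkc.mono fun x hx => ne_of_lt hx)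
  simp_rw [mul_assoc (g _) (g _)]
  refine ⟨_, hder.const_mul _, ?_⟩
  change ‖_ - _ * (∫ x, k x) * g' ω‖ ≤ _
  have hsplit : (∫ x in Iic (-(ω / 2)), k x) + (∫ x in Ioi (-(ω / 2)), k x) = ∫ x, k x :=
    intervalIntegral.integral_Iic_add_Ioi hkint.integrableOn hkint.integrableOn
  have hsub : (∫ x in Ioi (-(ω / 2)), (g' (ω + x) - g' ω) * k x)
      = (∫ x in Ioi (-(ω / 2)), g' (ω + x) * k x) - g' ω * ∫ x in Ioi (-(ω / 2)), k x := by
    simp_rw [sub_mul]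
    rw [integral_sub hint' (hkint.integrableOn.const_mul _), integral_const_mul]
  have hT1 : ‖∫ x in Ioi (-(ω / 2)), (g' (ω + x) - g' ω) * k x‖ ≤ 4 * A ^ 2 * M * E := by
    have hi : Integrable (fun x => 4 * A ^ 2 * E * ψ x) := hψint.const_mul _
    calc _ ≤ ∫ x in Ioi (-(ω / 2)), 4 * A ^ 2 * E * ψ x := by
          refine norm_integral_le_of_norm_le hi.integrableOn ?_
          filter_upwards [ae_restrict_mem measurableSet_Ioi, ae_restrict_of_ae h0] with x hx hx0
          have h := norm_deriv_sub_mul_exp_le hβ hα0 hα1 hA hg'' hg''b hω hωω₀ hx hx0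
          rw [norm_mul]
          calc _ ≤ ‖g' (ω + x) - g' ω‖ * (A * Real.exp (-β * |x| ^ α)) := by
                gcongr; exact hkb x hx0
            _ = A * (‖g' (ω + x) - g' ω‖ * Real.exp (-β * |x| ^ α)) := by ring
            _ ≤ A * (4 * A * ω ^ (α - 2) * Real.exp (-β * ω ^ α) * ψ x) := by gcongr
            _ = _ := by rw [hE]; ring
      _ ≤ ∫ x, 4 * A ^ 2 * E * ψ x :=
          setIntegral_le_integral hi (Filter.Eventually.of_forall fun x => by
            have := hψ0 x; simp only [Pi.zero_apply]; positivity)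
      _ = 4 * A ^ 2 * M * E := by rw [integral_const_mul, ← hM]; ring
  have hT2 : ‖∫ x in Iic (-(ω / 2)), k x‖ ≤ 2 * A * M * ω⁻¹ := by
    have hi : Integrable (fun x => 2 * A * ω⁻¹ * ψ x) := hψint.const_mul _
    calc _ ≤ ∫ x in Iic (-(ω / 2)), 2 * A * ω⁻¹ * ψ x := by
          refine norm_integral_le_of_norm_le hi.integrableOn ?_
          filter_upwards [ae_restrict_mem measurableSet_Iic] with x hx
          rw [mem_Iic] at hx
          have hx0 : x < 0 := by linarith
          have h1 : 1 ≤ 2 * ω⁻¹ * |x| := by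
            rw [abs_of_neg hx0]; field_simp; linarith
          have h2 : Real.exp (-β * |x| ^ α) ≤ Real.exp (-(β * (1 - α)) * |x| ^ α) := by
            apply Real.exp_le_exp.2
            have : 0 ≤ β * α * |x| ^ α := by positivity
            linarith
          calc _ ≤ A * Real.exp (-β * |x| ^ α) := hkb x hx0.ne
            _ ≤ A * ((2 * ω⁻¹ * |x|) * Real.exp (-(β * (1 - α)) * |x| ^ α)) := by
                gcongr
                exact h2.trans (le_mul_of_one_le_left (Real.exp_pos _).le h1)
            _ = _ := by simp only [hψ, Real.rpow_one]; ring
      _ ≤ ∫ x, 2 * A * ω⁻¹ * ψ x :=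
          setIntegral_le_integral hi (Filter.Eventually.of_forall fun x => by
            have := hψ0 x; simp only [Pi.zero_apply]; positivity)
      _ = 2 * A * M * ω⁻¹ := by rw [integral_const_mul, ← hM]; ring
  have hT2' : ‖g' ω * ∫ x in Iic (-(ω / 2)), k x‖ ≤ 2 * A ^ 2 * M * E := by
    have h1 := hg'b ω hω.ne'
    rw [abs_of_pos hω] at h1
    rw [norm_mul]
    calc _ ≤ (A * ω ^ (α - 1) * Real.exp (-β * ω ^ α)) * (2 * A * M * ω⁻¹) := by gcongr
      _ = 2 * A ^ 2 * M * E := by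
        rw [hE, show α - 2 = α - 1 - 1 by ring, Real.rpow_sub_one hω.ne' (α - 1)]; ring
  have hT3 : ‖(1 / 2 : ℂ) * (g (ω / 2) * k (-(ω / 2)))‖ ≤ A ^ 2 * K * E := by
    have hω2 : 0 < ω / 2 := by positivity
    have h1 := hgb (ω / 2) hω2.ne'
    have h2 := hkb (-(ω / 2)) (neg_ne_zero.2 hω2.ne')
    rw [abs_of_pos hω2] at h1
    rw [abs_neg, abs_of_pos hω2] at h2
    have h3 := hK ω hω
    rw [norm_mul, norm_mul]
    calc _ ≤ 1 * ((A * Real.exp (-β * (ω / 2) ^ α)) * (A * Real.exp (-β * (ω / 2) ^ α))) := by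
          gcongr; norm_num
      _ = A ^ 2 * (Real.exp (-β * (ω / 2) ^ α) * Real.exp (-β * (ω / 2) ^ α)) := by ring
      _ ≤ A ^ 2 * (K * ω ^ (α - 2) * Real.exp (-β * ω ^ α)) := by gcongr
      _ = _ := by rw [hE]; ring
  have hpi : ‖(((2 * π : ℝ) : ℂ)⁻¹)‖ ≤ 1 := by
    rw [norm_inv, Complex.norm_real, Real.norm_eq_abs, abs_of_pos (by positivity)]
    exact inv_le_one_of_one_le₀ (by linarith [Real.pi_gt_three])
  have hdecomp : ∀ z D P Q S : ℂ, z * (D + S) - z * (P + Q) * g' ω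
      = z * ((D - g' ω * Q) - g' ω * P + S) := fun z D P Q S => by ring
  rw [← hsplit, hdecomp, ← hsub, norm_mul]
  calc _ ≤ 1 * (4 * A ^ 2 * M * E + 2 * A ^ 2 * M * E + A ^ 2 * K * E) := by
        gcongr
        exact (norm_add_le _ _).trans (add_le_add ((norm_sub_le _ _).trans
          (add_le_add hT1 hT2')) hT3)
    _ = _ := by rw [hE]; ring
end

section
/- Let δ > 0 be fixed and let f : ℝ → ℂ be differentiable. Define F(ω) = f(ω) e^{2iδω}. Then for every ω ∈ ℝ, |F(ω) + (1/2)(F(ω + π/(2δ)) + F(ω − π/(2δ)))| ≤ (π/(2δ)) · sup{|f'(ζ)| : |ζ − ω| ≤ π/(2δ)}. -/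
/-!
Write `h = π / (2δ)`. Shifting `ω` by `±h` changes the phase `2δω` by `±π`, so the exponential
flips sign, and the averaged expression equals
`-(1/2) * ((f (ω + h) - f ω) + (f (ω - h) - f ω)) * e^{2iδω}`. Each increment of `f` is at most
`M * h` by the mean value inequality, and the exponential has norm one.
-/

open Real Set

/-- Lemma (oscillation damping): if `F(ω) = f(ω) e^{2iδω}` with `f` differentiable, then
`|F(ω) + (1/2)(F(ω + π/(2δ)) + F(ω − π/(2δ)))|` is bounded by `(π/(2δ))` times any bound
`M` for `|f'|` on the closed interval `[ω − π/(2δ), ω + π/(2δ)]`. -/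
theorem stmt_4
    (δ : ℝ) (hδ : 0 < δ)
    (f f' : ℝ → ℂ) (hf : ∀ x : ℝ, HasDerivAt f (f' x) x)
    (F : ℝ → ℂ)
    (hF : ∀ w : ℝ, F w = f w * Complex.exp (((2 * δ * w : ℝ) : ℂ) * Complex.I))
    (ω M : ℝ)
    (hM : ∀ ζ ∈ Icc (ω - π / (2 * δ)) (ω + π / (2 * δ)), ‖f' ζ‖ ≤ M) :
    ‖F ω + (1 / 2 : ℂ) * (F (ω + π / (2 * δ)) + F (ω - π / (2 * δ)))‖
      ≤ (π / (2 * δ)) * M := by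
  set h : ℝ := π / (2 * δ) with hh
  have hpos : 0 < h := by positivity
  have hδh : 2 * δ * h = π := by rw [hh]; field_simp
  set E : ℂ := Complex.exp (((2 * δ * ω : ℝ) : ℂ) * Complex.I) with hE
  have hplus : Complex.exp (((2 * δ * (ω + h) : ℝ) : ℂ) * Complex.I) = -E := by
    rw [mul_add, hδh, Complex.ofReal_add, add_mul, Complex.exp_add, Complex.exp_pi_mul_I]
    ring
  have hminus : Complex.exp (((2 * δ * (ω - h) : ℝ) : ℂ) * Complex.I) = -E := by
    rw [mul_sub, hδh, Complex.ofReal_sub, sub_mul, Complex.exp_sub, Complex.exp_pi_mul_I]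
    ring
  have hincr : ∀ y ∈ Icc (ω - h) (ω + h), ‖f y - f ω‖ ≤ M * ‖y - ω‖ := fun y hy =>
    (convex_Icc (ω - h) (ω + h)).norm_image_sub_le_of_norm_hasDerivWithin_le
      (fun x _ => (hf x).hasDerivWithinAt) hM ⟨by linarith, by linarith⟩ hy
  have h1 : ‖f (ω + h) - f ω‖ ≤ M * h := by
    simpa [abs_of_pos hpos] using hincr (ω + h) ⟨by linarith, le_rfl⟩
  have h2 : ‖f (ω - h) - f ω‖ ≤ M * h := by
    simpa [abs_of_pos hpos] using hincr (ω - h) ⟨le_rfl, by linarith⟩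
  have key : F ω + (1 / 2 : ℂ) * (F (ω + h) + F (ω - h))
      = -(1 / 2 : ℂ) * ((f (ω + h) - f ω) + (f (ω - h) - f ω)) * E := by
    rw [hF, hF, hF, hplus, hminus]
    ring
  have hEn : ‖E‖ = 1 := Complex.norm_exp_ofReal_mul_I _
  have hhalf : ‖-(1 / 2 : ℂ)‖ = 1 / 2 := by norm_num
  rw [key, norm_mul, norm_mul, hEn, hhalf]
  linarith [norm_add_le (f (ω + h) - f ω) (f (ω - h) - f ω)]
end

section
/- Let V, γ > 0 be constants, let g : [0,V] → ℝ be continuous with g(0) ≠ 0, and let h : [0,V] → ℝ be continuous, attain its maximum only at v = 0, and have a strictly negative one-sided derivative h'(0) at 0. Define I(t) = ∫₀^V v^{γ−1} g(v) e^{t h(v)} dv. Then I(t) · (t|h'(0)|)^γ / (Γ(γ) g(0) e^{t h(0)}) → 1 as t → ∞, and moreover there is a constant A > 0 such that |I(t)| ≤ A t^{−γ} e^{t h(0)} for all t > 0. -/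
open MeasureTheory Real Set Filter

/-!
Since `h` has a strict maximum at `0` and `h'(0) < 0`, the difference quotient `(h v - h 0) / v`,
extended by `h'(0)` at `0`, is continuous and negative on the compact interval `[0, V]`. Hence
`h v - h 0 ≤ -c v` on `[0, V]` for some `c > 0` (`exists_linear_bound`).

The substitution `v = u / t` gives `I(t) = t^{-γ} e^{t h(0)} ∫₀^∞ F_t(u) du`
(`integral_eq_scaled`), where
`F_t(u) = 1_{(0, tV]}(u) u^{γ-1} g(u/t) exp (t (h(u/t) - h(0)))` is `scaledIntegrand`.
The linear bound yields `|F_t(u)| ≤ M u^{γ-1} e^{-cu}`, with `M` a bound for `|g|`. This majorant is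
integrable and independent of `t`, which proves the uniform estimate. It also allows dominated
convergence: `F_t(u) → g(0) u^{γ-1} e^{h'(0) u}` pointwise, and the integral of the limit is
`g(0) Γ(γ) |h'(0)|^{-γ}`.
-/

/-- The integrand of `I(t)` after the substitution `v = u / t`, with the factor
`t^{-γ} e^{t h(0)}` removed and extended by zero outside `(0, tV]`. -/
noncomputable def scaledIntegrand (V γ : ℝ) (g h : ℝ → ℝ) (t : ℝ) : ℝ → ℝ :=
  indicator (Ioc 0 (t * V)) fun u => u ^ (γ - 1) * g (u / t) * exp (t * (h (u / t) - h 0))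

lemma exists_linear_bound {V : ℝ} (hV : 0 < V) {h : ℝ → ℝ} (hh : ContinuousOn h (Icc 0 V))
    (hmax : ∀ v ∈ Icc (0:ℝ) V, v ≠ 0 → h v < h 0) {h'0 : ℝ} (hh'0 : h'0 < 0)
    (hderiv : Tendsto (fun v => (h v - h 0) / v) (nhdsWithin 0 (Ioi 0)) (nhds h'0)) :
    ∃ c : ℝ, 0 < c ∧ ∀ v ∈ Icc (0:ℝ) V, h v - h 0 ≤ -(c * v) := by
  have hcont : ContinuousOn (Function.update (fun v => (h v - h 0) / v) 0 h'0) (Icc 0 V) := by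
    rw [continuousOn_update_iff]
    refine ⟨?_, fun _ => hderiv.mono_left (nhdsWithin_mono _ ?_)⟩
    · exact ((hh.mono sdiff_subset).sub continuousOn_const).div continuousOn_id fun x hx => hx.2
    · exact fun x hx => lt_of_le_of_ne hx.1.1 (Ne.symm hx.2)
  obtain ⟨w, hw, hwmax⟩ := isCompact_Icc.exists_isMaxOn (nonempty_Icc.2 hV.le) hcont
  refine ⟨-(Function.update (fun v => (h v - h 0) / v) 0 h'0 w), ?_, fun v hv => ?_⟩
  · by_cases hw0 : w = 0
    · simpa [hw0] using hh'0
    · rw [Function.update_of_ne hw0, neg_pos]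
      exact div_neg_of_neg_of_pos (sub_neg.2 (hmax w hw hw0)) (lt_of_le_of_ne hw.1 (Ne.symm hw0))
  · by_cases hv0 : v = 0
    · simp [hv0]
    · have hvpos : 0 < v := lt_of_le_of_ne hv.1 (Ne.symm hv0)
      have := hwmax hv
      simp only [mem_ofPred_eq] at this
      rw [Function.update_of_ne hv0, div_le_iff₀ hvpos] at this
      linarith

lemma integrableOn_rpow_mul_exp {γ c : ℝ} (hγ : 0 < γ) (hc : 0 < c) :
    IntegrableOn (fun u : ℝ => u ^ (γ - 1) * exp (-(c * u))) (Ioi 0) := by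
  -- The integral is a nonzero Gamma value, whereas a non-integrable function has integral `0`.
  refine not_imp_comm.1 integral_undef ?_
  rw [Real.integral_rpow_mul_exp_neg_mul_Ioi hγ hc]
  exact (mul_pos (rpow_pos_of_pos (by positivity) _) (Gamma_pos_of_pos hγ)).ne'

lemma integral_eq_scaled {V : ℝ} (hV : 0 < V) (γ : ℝ) (g h : ℝ → ℝ) {t : ℝ} (ht : 0 < t) :
    ∫ v in Ioc (0:ℝ) V, v ^ (γ - 1) * g v * exp (t * h v) =
      t ^ (-γ) * exp (t * h 0) * ∫ u in Ioi (0:ℝ), scaledIntegrand V γ g h t u := by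
  have hsub := intervalIntegral.integral_comp_div (a := 0) (b := t * V)
    (fun v => v ^ (γ - 1) * g v * exp (t * h v)) ht.ne'
  rw [zero_div, mul_div_cancel_left₀ _ ht.ne', intervalIntegral.integral_of_le (by positivity),
    intervalIntegral.integral_of_le hV.le, smul_eq_mul] at hsub
  have hscaled : ∫ u in Ioi (0:ℝ), scaledIntegrand V γ g h t u =
      ∫ u in Ioc 0 (t * V), u ^ (γ - 1) * g (u / t) * exp (t * (h (u / t) - h 0)) := by
    rw [scaledIntegrand, setIntegral_indicator measurableSet_Ioc,
      inter_eq_self_of_subset_right Ioc_subset_Ioi_self]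
  rw [hscaled, ← integral_const_mul, ← mul_right_inj' ht.ne', ← hsub, ← integral_const_mul]
  refine setIntegral_congr_fun measurableSet_Ioc fun u hu => ?_
  have hsplit : exp (t * h (u / t)) = exp (t * h 0) * exp (t * (h (u / t) - h 0)) := by
    rw [← exp_add]; ring_nf
  have hpow : t * t ^ (-γ) * t ^ (γ - 1) = 1 := by
    nth_rewrite 1 [← rpow_one t]
    rw [← rpow_add ht, ← rpow_add ht]
    ring_nf
    exact rpow_zero t
  have ht' : t ^ (γ - 1) ≠ 0 := (rpow_pos_of_pos ht _).ne'
  simp only [div_rpow hu.1.le ht.le, hsplit]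
  field_simp
  linear_combination -(u ^ (γ - 1) * g (u / t)) * hpow

lemma norm_scaledIntegrand_le {V γ c M : ℝ} {g h : ℝ → ℝ}
    (hc : ∀ v ∈ Icc (0:ℝ) V, h v - h 0 ≤ -(c * v)) (hM0 : 0 ≤ M)
    (hM : ∀ v ∈ Icc (0:ℝ) V, ‖g v‖ ≤ M) {t u : ℝ} (ht : 0 < t) (hu : 0 < u) :
    ‖scaledIntegrand V γ g h t u‖ ≤ M * (u ^ (γ - 1) * exp (-(c * u))) := by
  have hup := rpow_pos_of_pos hu (γ - 1)
  by_cases hmem : u ∈ Ioc 0 (t * V)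
  · have hv : u / t ∈ Icc (0:ℝ) V :=
      ⟨by positivity, by rw [div_le_iff₀ ht]; linarith [hmem.2]⟩
    rw [scaledIntegrand, indicator_of_mem hmem, norm_mul, norm_mul, norm_of_nonneg hup.le,
      norm_of_nonneg (exp_pos _).le]
    have hexp : exp (t * (h (u / t) - h 0)) ≤ exp (-(c * u)) := by
      rw [exp_le_exp]
      calc t * (h (u / t) - h 0) ≤ t * -(c * (u / t)) := by gcongr; exact hc _ hv
        _ = -(c * u) := by field_simp
    calc u ^ (γ - 1) * ‖g (u / t)‖ * exp (t * (h (u / t) - h 0))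
        ≤ u ^ (γ - 1) * M * exp (-(c * u)) := by gcongr; exact hM _ hv
      _ = _ := by ring
  · rw [scaledIntegrand, indicator_of_notMem hmem, norm_zero]
    positivity

lemma aestronglyMeasurable_scaledIntegrand {V γ : ℝ} {g h : ℝ → ℝ}
    (hg : ContinuousOn g (Icc 0 V)) (hh : ContinuousOn h (Icc 0 V)) {t : ℝ} (ht : 0 < t) :
    AEStronglyMeasurable (scaledIntegrand V γ g h t) (volume.restrict (Ioi 0)) := by
  have hmaps : MapsTo (fun u => u / t) (Ioc 0 (t * V)) (Icc 0 V) := fun u hu =>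
    ⟨div_nonneg hu.1.le ht.le, by rw [div_le_iff₀ ht]; linarith [hu.2]⟩
  have hdiv : ContinuousOn (fun u : ℝ => u / t) (Ioc 0 (t * V)) := by fun_prop
  have hcont : ContinuousOn
      (fun u => u ^ (γ - 1) * g (u / t) * exp (t * (h (u / t) - h 0))) (Ioc 0 (t * V)) := by
    refine ContinuousOn.mul (ContinuousOn.mul ?_ (hg.comp hdiv hmaps)) ?_
    · exact continuousOn_id.rpow_const fun u hu => Or.inl hu.1.ne'
    · exact (continuousOn_const.mul ((hh.comp hdiv hmaps).sub continuousOn_const)).rexp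
  refine AEStronglyMeasurable.restrict ?_
  exact (aestronglyMeasurable_indicator_iff measurableSet_Ioc).2
    (hcont.aestronglyMeasurable measurableSet_Ioc)

lemma tendsto_scaledIntegrand {V : ℝ} (hV : 0 < V) (γ : ℝ) {g h : ℝ → ℝ}
    (hg : ContinuousOn g (Icc 0 V)) {h'0 : ℝ}
    (hderiv : Tendsto (fun v => (h v - h 0) / v) (nhdsWithin 0 (Ioi 0)) (nhds h'0))
    {u : ℝ} (hu : 0 < u) :
    Tendsto (fun t => scaledIntegrand V γ g h t u) atTop
      (nhds (u ^ (γ - 1) * g 0 * exp (h'0 * u))) := by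
  have hdiv : Tendsto (fun t : ℝ => u / t) atTop (nhdsWithin 0 (Ioi 0)) := by
    refine tendsto_nhdsWithin_iff.2 ⟨tendsto_const_nhds.div_atTop tendsto_id, ?_⟩
    filter_upwards [eventually_gt_atTop 0] with t ht using div_pos hu ht
  have hgt : Tendsto g (nhdsWithin 0 (Ioi 0)) (nhds (g 0)) := by
    rw [← nhdsWithin_Ioc_eq_nhdsGT hV]
    exact (hg 0 ⟨le_rfl, hV.le⟩).mono_left (nhdsWithin_mono _ Ioc_subset_Icc_self)
  have hlim := (tendsto_const_nhds (x := u ^ (γ - 1))).mul (hgt.comp hdiv) |>.mul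
    ((continuous_exp.tendsto _).comp ((hderiv.comp hdiv).mul_const u))
  refine hlim.congr' ?_
  filter_upwards [eventually_gt_atTop 0, eventually_ge_atTop (u / V)] with t ht htV
  have hmem : u ∈ Ioc 0 (t * V) := ⟨hu, (div_le_iff₀ hV).1 htV⟩
  rw [scaledIntegrand, indicator_of_mem hmem]
  simp only [Function.comp_apply]
  congr 2
  field_simp

/-- Laplace's method on `[0,V]` with power singularity `v^{γ-1}`:
`I(t) = ∫₀^V v^{γ-1} g(v) e^{t h(v)} dv ∼ Γ(γ) g(0) e^{t h(0)} / (t|h'(0)|)^γ` as `t → ∞`,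
together with the uniform bound `|I(t)| ≤ A t^{-γ} e^{t h(0)}` for all `t > 0`. -/
theorem stmt_5
    (V γ : ℝ) (hV : 0 < V) (hγ : 0 < γ)
    (g h : ℝ → ℝ)
    (hg : ContinuousOn g (Icc 0 V)) (hg0 : g 0 ≠ 0)
    (hh : ContinuousOn h (Icc 0 V))
    (hmax : ∀ v ∈ Icc (0:ℝ) V, v ≠ 0 → h v < h 0)
    (h'0 : ℝ) (hh'0 : h'0 < 0)
    (hderiv : Tendsto (fun v => (h v - h 0) / v) (nhdsWithin 0 (Ioi 0)) (nhds h'0)) :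
    Tendsto (fun t : ℝ =>
        (∫ v in Ioc (0:ℝ) V, v ^ (γ - 1) * g v * Real.exp (t * h v)) *
          (t * |h'0|) ^ γ / (Real.Gamma γ * g 0 * Real.exp (t * h 0)))
      atTop (nhds 1) ∧
    ∃ A : ℝ, 0 < A ∧ ∀ t : ℝ, 0 < t →
      |∫ v in Ioc (0:ℝ) V, v ^ (γ - 1) * g v * Real.exp (t * h v)|
        ≤ A * t ^ (-γ) * Real.exp (t * h 0) := by
  obtain ⟨c, hcpos, hc⟩ := exists_linear_bound hV hh hmax hh'0 hderiv
  obtain ⟨M, hM⟩ := isCompact_Icc.exists_bound_of_continuousOn hg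
  have hM0 : 0 < M := (norm_pos_iff.2 hg0).trans_le (hM 0 ⟨le_rfl, hV.le⟩)
  have hint : IntegrableOn (fun u : ℝ => M * (u ^ (γ - 1) * exp (-(c * u)))) (Ioi 0) :=
    (integrableOn_rpow_mul_exp hγ hcpos).const_mul M
  have hdom : ∀ t : ℝ, 0 < t → ∀ᵐ u ∂volume.restrict (Ioi (0:ℝ)),
      ‖scaledIntegrand V γ g h t u‖ ≤ M * (u ^ (γ - 1) * exp (-(c * u))) := fun t ht =>
    ae_restrict_of_forall_mem measurableSet_Ioi fun u hu =>
      norm_scaledIntegrand_le hc hM0.le hM ht hu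
  have hΓ := Gamma_pos_of_pos hγ
  have habs : 0 < |h'0| := abs_pos.2 hh'0.ne
  constructor
  · have hlim : Tendsto (fun t => ∫ u in Ioi (0:ℝ), scaledIntegrand V γ g h t u) atTop
        (nhds (∫ u in Ioi (0:ℝ), u ^ (γ - 1) * g 0 * exp (h'0 * u))) := by
      refine tendsto_integral_filter_of_dominated_convergence _ ?_ ?_ hint ?_
      · filter_upwards [eventually_gt_atTop 0] with t ht
          using aestronglyMeasurable_scaledIntegrand hg hh ht
      · filter_upwards [eventually_gt_atTop 0] with t ht using hdom t ht
      · exact ae_restrict_of_forall_mem measurableSet_Ioi fun u hu =>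
          tendsto_scaledIntegrand hV γ hg hderiv hu
    have hval : ∫ u in Ioi (0:ℝ), u ^ (γ - 1) * g 0 * exp (h'0 * u) =
        g 0 * ((1 / |h'0|) ^ γ * Gamma γ) := by
      rw [← Real.integral_rpow_mul_exp_neg_mul_Ioi hγ habs, ← integral_const_mul]
      congr 1 with u
      rw [abs_of_neg hh'0]
      ring_nf
    rw [hval] at hlim
    have hlim' := hlim.mul_const (|h'0| ^ γ / (Gamma γ * g 0))
    have hone : g 0 * ((1 / |h'0|) ^ γ * Gamma γ) * (|h'0| ^ γ / (Gamma γ * g 0)) = 1 := by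
      have := (rpow_pos_of_pos habs γ).ne'
      rw [one_div, inv_rpow habs.le]
      field_simp
    rw [hone] at hlim'
    refine hlim'.congr' ?_
    filter_upwards [eventually_gt_atTop 0] with t ht
    have := (rpow_pos_of_pos ht γ).ne'
    rw [integral_eq_scaled hV γ g h ht, mul_rpow ht.le habs.le, rpow_neg ht.le]
    field_simp
  · refine ⟨∫ u in Ioi (0:ℝ), M * (u ^ (γ - 1) * exp (-(c * u))), ?_, fun t ht => ?_⟩
    · rw [integral_const_mul, Real.integral_rpow_mul_exp_neg_mul_Ioi hγ hcpos]
      positivity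
    · have hbound := norm_integral_le_of_norm_le hint (hdom t ht)
      have hpos : 0 < t ^ (-γ) * exp (t * h 0) := mul_pos (rpow_pos_of_pos ht _) (exp_pos _)
      rw [integral_eq_scaled hV γ g h ht, abs_mul, abs_of_pos hpos, mul_assoc _ (t ^ (-γ)),
        mul_comm _ (t ^ (-γ) * exp (t * h 0))]
      exact mul_le_mul_of_nonneg_left hbound hpos.le
end

section
/- Let γ > 0 be constant, let g : [0,∞) → ℝ be continuous with g(0) ≠ 0, and let h : [0,∞) → ℝ be continuous, attain its maximum only at v = 0, have a strictly negative one-sided derivative h'(0) at 0, and satisfy h(v) → −∞ as v → ∞. Suppose that I(t) = ∫₀^∞ v^{γ−1} g(v) e^{t h(v)} dv converges for some t = t₀ > 0. Then I(t) · (t|h'(0)|)^γ / (Γ(γ) g(0) e^{t h(0)}) → 1 as t → ∞, and there is a constant A > 0 such that |I(t)| ≤ A t^{−γ} e^{t h(0)} for all t > t₀. -/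
open MeasureTheory Real Set Filter

/-!
Write `k = h - h 0` and `a = -h'(0) > 0`, so that `I(t) = e^{t h 0} J(t)` with
`J(t) = ∫ v^{γ-1} g(v) e^{t k(v)} dv`. Fix `δ > 0` such that `k(v) ≤ -(a/2) v` and `|g| ≤ M` on
`(0, δ]`, and `η > 0` such that `k ≤ -η` on `[δ, ∞)`.

* On `(0, δ]`, the substitution `v = s / t` turns `t^γ ∫` into an integral dominated by
  `M s^{γ-1} e^{-(a/2) s}` whose integrand tends to `g(0) s^{γ-1} e^{-a s}`; dominated convergence
  gives the limit `g(0) Γ(γ) a^{-γ}` (`laplace_near`).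
* On `(δ, ∞)`, the integral is at most `e^{-(t - t₀) η}` times the convergent integral at `t₀`, which
  is negligible against `t^{-γ}` (`laplace_tail`).

Hence `t^γ J(t) → g(0) Γ(γ) a^{-γ}`. The uniform bound follows from this limit for large `t`, and
from `|J(t)| ≤ ∫ v^{γ-1} |g| e^{t₀ k}` on the remaining bounded range of `t`.
-/

/-- Away from its unique maximiser `0`, the function `h` stays below `h 0` by a fixed gap. -/
lemma exists_gap {h : ℝ → ℝ} (hh : ContinuousOn h (Ici 0))
    (hmax : ∀ v ∈ Ici (0:ℝ), v ≠ 0 → h v < h 0) (hinf : Tendsto h atTop atBot)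
    {δ : ℝ} (hδ : 0 < δ) : ∃ η, 0 < η ∧ ∀ v, δ ≤ v → h v - h 0 ≤ -η := by
  obtain ⟨R, hR⟩ := eventually_atTop.1 (hinf.eventually_le_atBot (h 0 - 1))
  obtain ⟨x, hx, hxm⟩ := (isCompact_Icc (a := δ) (b := max R δ)).exists_isMaxOn
    ⟨δ, left_mem_Icc.2 (le_max_right _ _)⟩
    (hh.mono fun y hy => hδ.le.trans hy.1)
  have hx0 : 0 < x := hδ.trans_le hx.1
  have hlt := hmax x hx0.le hx0.ne'
  refine ⟨min 1 (h 0 - h x), lt_min one_pos (by linarith), fun v hv => ?_⟩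
  have h1 := min_le_left 1 (h 0 - h x)
  have h2 := min_le_right 1 (h 0 - h x)
  rcases le_total v (max R δ) with hvR | hvR
  · have : h v ≤ h x := hxm ⟨hv, hvR⟩
    linarith
  · have := hR v ((le_max_left _ _).trans hvR)
    linarith

/-- A neighbourhood `(0, δ]` on which `k` lies below the line of half its slope at `0` and `g` is
bounded. -/
lemma exists_near {g k : ℝ → ℝ} (hg : ContinuousOn g (Ici 0)) {a : ℝ} (ha : 0 < a)
    (hderiv : Tendsto (fun v => k v / v) (nhdsWithin 0 (Ioi 0)) (nhds (-a))) :
    ∃ δ M, 0 < δ ∧ ∀ v ∈ Ioc 0 δ, k v ≤ -(a / 2) * v ∧ |g v| ≤ M := by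
  have e1 : ∀ᶠ v in nhdsWithin (0:ℝ) (Ioi 0), k v / v < -(a / 2) :=
    hderiv.eventually_lt_const (by linarith)
  obtain ⟨u, hu, hus⟩ := mem_nhdsGT_iff_exists_Ioc_subset.1 e1
  obtain ⟨M, hM⟩ := (isCompact_Icc (a := (0:ℝ)) (b := u)).exists_bound_of_continuousOn
    (hg.mono fun y hy => hy.1)
  refine ⟨u, M, hu, fun v hv => ⟨?_, hM v ⟨hv.1.le, hv.2⟩⟩⟩
  have : k v / v < -(a / 2) := hus hv
  exact ((div_lt_iff₀ hv.1).1 this).le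

lemma laplace_continuousOn (γ : ℝ) {g k : ℝ → ℝ} (hg : ContinuousOn g (Ici 0))
    (hk : ContinuousOn k (Ici 0)) (t : ℝ) :
    ContinuousOn (fun v => v ^ (γ - 1) * g v * Real.exp (t * k v)) (Ioi 0) := by
  have hg' := hg.mono Ioi_subset_Ici_self
  have hk' := hk.mono Ioi_subset_Ici_self
  have : ContinuousOn (fun v : ℝ => v ^ (γ - 1)) (Ioi 0) := fun v hv =>
    (Real.continuousAt_rpow_const v _ (Or.inl (ne_of_gt hv))).continuousWithinAt
  exact (this.mul hg').mul (Real.continuous_exp.comp_continuousOn (hk'.const_mul t))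

/-- The contribution of `(0, δ]`, by rescaling `v = s / t` and dominated convergence. -/
lemma laplace_near {γ : ℝ} (hγ : 0 < γ) {g k : ℝ → ℝ} (hg : ContinuousOn g (Ici 0))
    (hk : ContinuousOn k (Ici 0)) {a : ℝ} (ha : 0 < a)
    (hderiv : Tendsto (fun v => k v / v) (nhdsWithin 0 (Ioi 0)) (nhds (-a)))
    {δ M : ℝ} (hδ : 0 < δ) (hb : ∀ v ∈ Ioc 0 δ, k v ≤ -(a / 2) * v ∧ |g v| ≤ M) :
    Tendsto (fun t : ℝ => t ^ γ * ∫ v in Ioc 0 δ, v ^ (γ - 1) * g v * Real.exp (t * k v))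
      atTop (nhds (g 0 * Real.Gamma γ * a ^ (-γ))) := by
  have hM : 0 ≤ M := (abs_nonneg _).trans (hb δ ⟨hδ, le_rfl⟩).2
  -- the rescaled integrand
  let Φ : ℝ → ℝ → ℝ := fun t s =>
    t ^ (γ - 1) * (Ioc 0 δ).indicator
      (fun v => v ^ (γ - 1) * g v * Real.exp (t * k v)) (t⁻¹ * s)
  have hΦ : ∀ t s : ℝ, 0 < t → 0 < s → t⁻¹ * s ≤ δ →
      Φ t s = s ^ (γ - 1) * (g (t⁻¹ * s) * Real.exp (t * k (t⁻¹ * s))) := by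
    intro t s ht hs hle
    have hpos : 0 < t⁻¹ * s := by positivity
    simp only [Φ]
    rw [indicator_of_mem (show t⁻¹ * s ∈ Ioc 0 δ from ⟨hpos, hle⟩)]
    have : t ^ (γ - 1) * (t⁻¹ * s) ^ (γ - 1) = s ^ (γ - 1) := by
      rw [← Real.mul_rpow ht.le hpos.le, mul_inv_cancel_left₀ ht.ne']
    rw [← this]
    ring
  have hlim : Tendsto (fun t => ∫ s in Ioi (0:ℝ), Φ t s) atTop
      (nhds (∫ s in Ioi (0:ℝ), s ^ (γ - 1) * (g 0 * Real.exp (-a * s)))) := by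
    refine tendsto_integral_filter_of_dominated_convergence
      (fun s => M * (s ^ (γ - 1) * Real.exp (-(a / 2) * s ^ (1:ℝ)))) ?_ ?_ ?_ ?_
    · refine Eventually.of_forall fun t => ?_
      have hm : Measurable ((Ioc 0 δ).indicator
          (fun v => v ^ (γ - 1) * g v * Real.exp (t * k v))) := by
        classical
        rw [← piecewise_eq_indicator]
        exact ((laplace_continuousOn γ hg hk t).mono Ioc_subset_Ioi_self).measurable_piecewise
          continuousOn_const measurableSet_Ioc
      exact ((hm.comp (measurable_const_mul _)).const_mul _).aestronglyMeasurable
    · filter_upwards [eventually_gt_atTop 0] with t ht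
      refine (ae_restrict_iff' measurableSet_Ioi).2 (Eventually.of_forall fun s hs => ?_)
      have hs : 0 < s := hs
      have hpos : 0 < t⁻¹ * s := by positivity
      rw [Real.rpow_one]
      by_cases hle : t⁻¹ * s ≤ δ
      · obtain ⟨h1, h2⟩ := hb _ ⟨hpos, hle⟩
        have h3 : t * k (t⁻¹ * s) ≤ -(a / 2) * s := by
          have := mul_le_mul_of_nonneg_left h1 ht.le
          calc _ ≤ _ := this
            _ = _ := by field_simp
        rw [hΦ t s ht hs hle, norm_mul, norm_mul, Real.norm_eq_abs, Real.norm_eq_abs,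
          Real.norm_eq_abs, Real.abs_exp, abs_of_pos (Real.rpow_pos_of_pos hs _)]
        calc s ^ (γ - 1) * (|g (t⁻¹ * s)| * Real.exp (t * k (t⁻¹ * s)))
            ≤ s ^ (γ - 1) * (M * Real.exp (-(a / 2) * s)) := by gcongr
          _ = _ := by ring
      · simp only [Φ]
        rw [indicator_of_notMem (fun hmem => hle hmem.2), mul_zero, norm_zero]
        positivity
    · exact (integrableOn_rpow_mul_exp_neg_mul_rpow (by linarith) one_pos
        (by linarith)).const_mul M
    · refine (ae_restrict_iff' measurableSet_Ioi).2 (Eventually.of_forall fun s hs => ?_)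
      have hs : 0 < s := hs
      have h0 : Tendsto (fun t : ℝ => t⁻¹ * s) atTop (nhdsWithin 0 (Ioi 0)) := by
        refine tendsto_nhdsWithin_iff.2 ⟨?_, ?_⟩
        · simpa using (tendsto_inv_atTop_zero (𝕜 := ℝ)).mul_const s
        · filter_upwards [eventually_gt_atTop 0] with t ht
          exact mul_pos (inv_pos.2 ht) hs
      have hgl : Tendsto (fun t : ℝ => g (t⁻¹ * s)) atTop (nhds (g 0)) :=
        ((hg 0 self_mem_Ici).mono Ioi_subset_Ici_self).tendsto.comp h0
      have hkl : Tendsto (fun t : ℝ => t * k (t⁻¹ * s)) atTop (nhds (-a * s)) := by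
        refine ((hderiv.comp h0).mul_const s).congr' ?_
        filter_upwards [eventually_gt_atTop 0] with t ht
        simp only [Function.comp]
        field_simp
      refine ((hgl.mul ((Real.continuous_exp.tendsto _).comp hkl)).const_mul
        (s ^ (γ - 1))).congr' ?_
      filter_upwards [eventually_gt_atTop 0,
        (h0.mono_right nhdsWithin_le_nhds).eventually_le_const hδ] with t ht hle
      exact (hΦ t s ht hs hle).symm
  have hval : ∫ s in Ioi (0:ℝ), s ^ (γ - 1) * (g 0 * Real.exp (-a * s))
      = g 0 * Real.Gamma γ * a ^ (-γ) := by
    have := Real.integral_rpow_mul_exp_neg_mul_Ioi hγ ha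
    calc _ = ∫ s in Ioi (0:ℝ), g 0 * (s ^ (γ - 1) * Real.exp (-(a * s))) := by
          congr 1; ext s; rw [neg_mul]; ring
      _ = _ := by
        rw [integral_const_mul, this, one_div, Real.inv_rpow ha.le, Real.rpow_neg ha.le]; ring
  rw [← hval]
  refine hlim.congr' ?_
  filter_upwards [eventually_gt_atTop 0] with t ht
  simp only [Φ]
  rw [integral_const_mul, integral_comp_mul_left_Ioi _ _ (inv_pos.2 ht), mul_zero, inv_inv,
    smul_eq_mul, setIntegral_indicator measurableSet_Ioc,
    inter_eq_right.2 Ioc_subset_Ioi_self, ← mul_assoc, Real.rpow_sub_one ht.ne',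
    div_mul_cancel₀ _ ht.ne']

/-- Where `k ≤ -η`, passing from `t₀` to `t ≥ t₀` gains a factor `e^{-(t - t₀) η}`. -/
lemma laplace_norm_le (γ : ℝ) {g k : ℝ → ℝ} {t₀ t η v : ℝ} (ht : t₀ ≤ t) (hη : k v ≤ -η) :
    ‖v ^ (γ - 1) * g v * Real.exp (t * k v)‖
      ≤ Real.exp (-(t - t₀) * η) * ‖v ^ (γ - 1) * g v * Real.exp (t₀ * k v)‖ := by
  rw [norm_mul, norm_mul (_ * _), Real.norm_eq_abs (Real.exp _), Real.norm_eq_abs (Real.exp _),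
    Real.abs_exp, Real.abs_exp, mul_left_comm, ← Real.exp_add]
  gcongr
  nlinarith

/-- The contribution of `(δ, ∞)` is exponentially small. -/
lemma laplace_tail (γ : ℝ) {g k : ℝ → ℝ} {t₀ η δ : ℝ} (hδ : 0 < δ) (hη : 0 < η)
    (hgap : ∀ v, δ ≤ v → k v ≤ -η)
    (hconv : IntegrableOn (fun v => v ^ (γ - 1) * g v * Real.exp (t₀ * k v)) (Ioi 0)) :
    Tendsto (fun t : ℝ => t ^ γ * ∫ v in Ioi δ, v ^ (γ - 1) * g v * Real.exp (t * k v))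
      atTop (nhds 0) := by
  have hc := (hconv.mono_set (Ioi_subset_Ioi hδ.le)).norm
  set K := ∫ v in Ioi δ, ‖v ^ (γ - 1) * g v * Real.exp (t₀ * k v)‖ with hK
  have hz : Tendsto (fun t : ℝ => t ^ γ * Real.exp (-η * t) * (Real.exp (t₀ * η) * K))
      atTop (nhds 0) := by
    simpa using (tendsto_rpow_mul_exp_neg_mul_atTop_nhds_zero γ η hη).mul_const
      (Real.exp (t₀ * η) * K)
  refine squeeze_zero_norm' ?_ hz
  filter_upwards [eventually_gt_atTop 0, eventually_ge_atTop t₀] with t ht htt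
  have h1 : ‖∫ v in Ioi δ, v ^ (γ - 1) * g v * Real.exp (t * k v)‖
      ≤ Real.exp (-(t - t₀) * η) * K := by
    rw [hK, ← integral_const_mul]
    refine norm_integral_le_of_norm_le (hc.const_mul _) ?_
    exact (ae_restrict_iff' measurableSet_Ioi).2 (Eventually.of_forall fun v hv =>
      laplace_norm_le γ htt (hgap v (le_of_lt hv)))
  rw [norm_mul, Real.norm_of_nonneg (Real.rpow_nonneg ht.le _)]
  calc _ ≤ t ^ γ * (Real.exp (-(t - t₀) * η) * K) := by gcongr
    _ = _ := by
      rw [show -(t - t₀) * η = -η * t + t₀ * η by ring, Real.exp_add]; ring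

/-- Laplace's method on `[0,∞)` with power singularity `v^{γ-1}`: if additionally
`h(v) → −∞` as `v → ∞` and `I(t₀)` converges, then
`I(t) = ∫₀^∞ v^{γ-1} g(v) e^{t h(v)} dv ∼ Γ(γ) g(0) e^{t h(0)} / (t|h'(0)|)^γ` as `t → ∞`,
together with the uniform bound `|I(t)| ≤ A t^{-γ} e^{t h(0)}` for all `t > t₀`. -/
theorem stmt_6
    (γ : ℝ) (hγ : 0 < γ)
    (g h : ℝ → ℝ)
    (hg : ContinuousOn g (Ici 0)) (hg0 : g 0 ≠ 0)
    (hh : ContinuousOn h (Ici 0))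
    (hmax : ∀ v ∈ Ici (0:ℝ), v ≠ 0 → h v < h 0)
    (h'0 : ℝ) (hh'0 : h'0 < 0)
    (hderiv : Tendsto (fun v => (h v - h 0) / v) (nhdsWithin 0 (Ioi 0)) (nhds h'0))
    (hinf : Tendsto h atTop atBot)
    (t₀ : ℝ) (ht₀ : 0 < t₀)
    (hconv : IntegrableOn (fun v => v ^ (γ - 1) * g v * Real.exp (t₀ * h v)) (Ioi 0)) :
    Tendsto (fun t : ℝ =>
        (∫ v in Ioi (0:ℝ), v ^ (γ - 1) * g v * Real.exp (t * h v)) *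
          (t * |h'0|) ^ γ / (Real.Gamma γ * g 0 * Real.exp (t * h 0)))
      atTop (nhds 1) ∧
    ∃ A : ℝ, 0 < A ∧ ∀ t : ℝ, t₀ < t →
      |∫ v in Ioi (0:ℝ), v ^ (γ - 1) * g v * Real.exp (t * h v)|
        ≤ A * t ^ (-γ) * Real.exp (t * h 0) := by
  set a := -h'0 with ha_def
  have ha : 0 < a := by linarith
  let k : ℝ → ℝ := fun v => h v - h 0
  have hk : ContinuousOn k (Ici 0) := hh.sub continuousOn_const
  have hkd : Tendsto (fun v => k v / v) (nhdsWithin 0 (Ioi 0)) (nhds (-a)) := by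
    rw [ha_def, neg_neg]; exact hderiv
  have hk0 : ∀ v ∈ Ioi (0:ℝ), k v ≤ -0 := fun v hv => by
    have := hmax v (Ioi_subset_Ici_self hv) (ne_of_gt hv)
    simp only [k]; linarith
  have hshift : ∀ t v : ℝ, v ^ (γ - 1) * g v * Real.exp (t * k v)
      = v ^ (γ - 1) * g v * Real.exp (t * h v) * Real.exp (-(t * h 0)) := fun t v => by
    rw [mul_assoc _ (Real.exp _) (Real.exp _), ← Real.exp_add]
    congr 2
    simp only [k]; ring
  have hconvk : IntegrableOn (fun v => v ^ (γ - 1) * g v * Real.exp (t₀ * k v)) (Ioi 0) := by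
    simp only [hshift]
    exact hconv.mul_const _
  set J : ℝ → ℝ := fun t => ∫ v in Ioi (0:ℝ), v ^ (γ - 1) * g v * Real.exp (t * k v) with hJ
  have hI : ∀ t : ℝ, ∫ v in Ioi (0:ℝ), v ^ (γ - 1) * g v * Real.exp (t * h v)
      = J t * Real.exp (t * h 0) := fun t => by
    simp only [hJ, hshift]
    rw [integral_mul_const, mul_assoc, ← Real.exp_add, neg_add_cancel, Real.exp_zero, mul_one]
  have hnorm : ∀ t, t₀ ≤ t → ∀ v ∈ Ioi (0:ℝ), ‖v ^ (γ - 1) * g v * Real.exp (t * k v)‖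
      ≤ ‖v ^ (γ - 1) * g v * Real.exp (t₀ * k v)‖ := fun t ht v hv => by
    simpa using laplace_norm_le γ (g := g) ht (hk0 v hv)
  have hint : ∀ t, t₀ ≤ t →
      IntegrableOn (fun v => v ^ (γ - 1) * g v * Real.exp (t * k v)) (Ioi 0) := fun t ht =>
    hconvk.norm.mono' ((laplace_continuousOn γ hg hk t).aestronglyMeasurable measurableSet_Ioi)
      ((ae_restrict_iff' measurableSet_Ioi).2 (Eventually.of_forall (hnorm t ht)))
  obtain ⟨δ, M, hδ, hb⟩ := exists_near hg ha hkd
  obtain ⟨η, hη, hgap⟩ := exists_gap hh hmax hinf hδ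
  have hlim : Tendsto (fun t : ℝ => t ^ γ * J t) atTop
      (nhds (g 0 * Real.Gamma γ * a ^ (-γ))) := by
    have := (laplace_near hγ hg hk ha hkd hδ hb).add (laplace_tail γ hδ hη hgap hconvk)
    rw [add_zero] at this
    refine this.congr' ?_
    filter_upwards [eventually_ge_atTop t₀] with t ht
    rw [← mul_add, hJ, ← setIntegral_union Ioc_disjoint_Ioi_same measurableSet_Ioi
      ((hint t ht).mono_set Ioc_subset_Ioi_self)
      ((hint t ht).mono_set (Ioi_subset_Ioi hδ.le)), Ioc_union_Ioi_eq_Ioi hδ.le]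
  have hΓ := Real.Gamma_pos_of_pos hγ
  have haγ := Real.rpow_pos_of_pos ha γ
  constructor
  · have h1 := hlim.mul_const (a ^ γ / (Real.Gamma γ * g 0))
    have h2 : g 0 * Real.Gamma γ * a ^ (-γ) * (a ^ γ / (Real.Gamma γ * g 0)) = 1 := by
      rw [Real.rpow_neg ha.le]
      field_simp
    rw [h2] at h1
    refine h1.congr' ?_
    filter_upwards [eventually_gt_atTop 0] with t ht
    rw [hI, abs_of_neg hh'0, Real.mul_rpow ht.le ha.le]
    have := Real.exp_pos (t * h 0)
    field_simp
  · set L := g 0 * Real.Gamma γ * a ^ (-γ)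
    set K := ∫ v in Ioi (0:ℝ), ‖v ^ (γ - 1) * g v * Real.exp (t₀ * k v)‖ with hK
    have hK0 : 0 ≤ K := integral_nonneg fun _ => norm_nonneg _
    have hJK : ∀ t, t₀ ≤ t → |J t| ≤ K := fun t ht =>
      norm_integral_le_of_norm_le hconvk.norm
        ((ae_restrict_iff' measurableSet_Ioi).2 (Eventually.of_forall (hnorm t ht)))
    obtain ⟨T, hT⟩ := eventually_atTop.1
      (hlim.abs.eventually_le_const (show |L| < |L| + 1 by linarith))
    have hT0 : 0 ≤ |T| ^ γ * K := by positivity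
    refine ⟨|L| + 1 + |T| ^ γ * K, by positivity, fun t ht => ?_⟩
    have ht0 : 0 < t := ht₀.trans ht
    have htγ := Real.rpow_pos_of_pos ht0 γ
    have key : t ^ γ * |J t| ≤ |L| + 1 + |T| ^ γ * K := by
      rcases le_total T t with hTt | hTt
      · have := hT t hTt
        rw [abs_mul, abs_of_pos htγ] at this
        linarith
      · have : t ^ γ * |J t| ≤ |T| ^ γ * K := by
          gcongr
          · exact hTt.trans (le_abs_self T)
          · exact hJK t ht.le
        linarith [abs_nonneg L]
    rw [hI, abs_mul, Real.abs_exp, Real.rpow_neg ht0.le, ← div_eq_mul_inv]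
    gcongr
    rw [le_div_iff₀ htγ, mul_comm]
    exact key
end

section
/- For every α with 0 < α < 1 and all x, y > 0, the inequality x^α + y^α ≥ (x+y)^α + (1−α)·(min{x,y})^α holds. -/
/-!
By symmetry let `x ≤ y`; the claim becomes `(x + y)^α ≤ α x^α + y^α`. Put `s = x / y ∈ (0, 1]` and
divide by `y^α`: Bernoulli's inequality gives `(1 + s)^α ≤ 1 + α s`, and `s ≤ s^α` since `α ≤ 1`.
-/

open Real

/-- The inequality with the minimum resolved to `x`, its two `x^α` terms combined. -/
lemma add_rpow_le_of_le {α x y : ℝ} (hα0 : 0 < α) (hα1 : α < 1) (hx : 0 < x) (hxy : x ≤ y) :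
    (x + y) ^ α ≤ α * x ^ α + y ^ α := by
  have hy : 0 < y := hx.trans_le hxy
  have hs : 0 < x / y := div_pos hx hy
  have h_bernoulli : (1 + x / y) ^ α ≤ 1 + α * (x / y) :=
    rpow_one_add_le_one_add_mul_self (by linarith) hα0.le hα1.le
  have h_pow : x / y ≤ (x / y) ^ α := by
    simpa using Real.rpow_le_rpow_of_exponent_ge hs ((div_le_one hy).2 hxy) hα1.le
  have hyα : 0 < y ^ α := Real.rpow_pos_of_pos hy α
  calc (x + y) ^ α = (y * (1 + x / y)) ^ α := by congr 1; field_simp; ring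
    _ = y ^ α * (1 + x / y) ^ α := Real.mul_rpow hy.le (by positivity)
    _ ≤ y ^ α * (1 + α * (x / y) ^ α) := by
        gcongr
        exact h_bernoulli.trans (by gcongr)
    _ = α * x ^ α + y ^ α := by
        rw [Real.div_rpow hx.le hy.le]
        field_simp
        ring

/-- For `0 < α < 1` and `x, y > 0`:
`x^α + y^α ≥ (x+y)^α + (1−α)·(min{x,y})^α`. -/
theorem stmt_8
    (α x y : ℝ) (hα0 : 0 < α) (hα1 : α < 1) (hx : 0 < x) (hy : 0 < y) :
    (x + y) ^ α + (1 - α) * (min x y) ^ α ≤ x ^ α + y ^ α := by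
  rcases le_total x y with h | h
  · rw [min_eq_left h]
    linarith [add_rpow_le_of_le hα0 hα1 hx h]
  · rw [min_eq_right h, add_comm x y]
    linarith [add_rpow_le_of_le hα0 hα1 hy h]
end

section
/- Let β > 0, 0 < α < 1, and η ≥ 0. Then there exists a constant C > 0 such that ∫₀^{ω/2} ω' (ω−ω')^{−η} e^{−β((ω−ω')^α + (ω')^α)} dω' ≤ C ω^{−η} e^{−βω^α} for all ω > 0. -/
open MeasureTheory Real Set

/-!
Since `0 < α < 1`, the map `t ↦ t ^ α` is strictly subadditive in a quantitative sense: for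
`0 < x ≤ y`, `(x + y) ^ α ≤ y ^ α + α * x ^ α` (`rpow_add_le_of_le`). With `y = ω - x` and
`x < ω / 2` the exponential in the integrand is therefore at most
`exp (-β ω ^ α) * exp (-β (1 - α) x ^ α)`, while `(ω - x) ^ (-η) ≤ 2 ^ η * ω ^ (-η)`.
What remains under the integral, `x * exp (-β (1 - α) x ^ α)`, is integrable on `(0, ∞)`, so its
integral gives a constant independent of `ω`.
-/

/-- Quantitative subadditivity of `t ↦ t ^ α`: Bernoulli's inequality for `(1 + x / y) ^ α`,
combined with `x / y ≤ (x / y) ^ α`. -/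
lemma rpow_add_le_of_le_s9 {α x y : ℝ} (hα0 : 0 < α) (hα1 : α < 1) (hx : 0 < x) (hxy : x ≤ y) :
    (x + y) ^ α ≤ y ^ α + α * x ^ α := by
  have hy : 0 < y := hx.trans_le hxy
  have ht : 0 < x / y := div_pos hx hy
  have ht1 : x / y ≤ 1 := (div_le_one hy).2 hxy
  have hbern : (1 + x / y) ^ α ≤ 1 + α * (x / y) :=
    rpow_one_add_le_one_add_mul_self (by linarith) hα0.le hα1.le
  have hpow : x / y ≤ (x / y) ^ α := by
    simpa using Real.rpow_le_rpow_of_exponent_ge ht ht1 hα1.le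
  have hsum : x + y = (1 + x / y) * y := by field_simp; ring
  have hxpow : (x / y) ^ α * y ^ α = x ^ α := by
    rw [← Real.mul_rpow ht.le hy.le, div_mul_cancel₀ _ hy.ne']
  calc (x + y) ^ α = (1 + x / y) ^ α * y ^ α := by
        rw [hsum, Real.mul_rpow (by positivity) hy.le]
    _ ≤ (1 + α * (x / y) ^ α) * y ^ α := by
        gcongr
        exact hbern.trans (by gcongr)
    _ = y ^ α + α * x ^ α := by rw [← hxpow]; ring

lemma integrableOn_mul_exp_neg_mul_rpow {α b : ℝ} (hα0 : 0 < α) (hb : 0 < b) :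
    IntegrableOn (fun x : ℝ => x * Real.exp (-b * x ^ α)) (Ioi 0) := by
  simpa using integrableOn_rpow_mul_exp_neg_mul_rpow (s := 1) (by norm_num) hα0 hb

/-- Key convolution estimate: for `β > 0`, `0 < α < 1`, `η ≥ 0`, there is `C > 0` with
`∫₀^{ω/2} ω' (ω−ω')^{−η} e^{−β((ω−ω')^α + (ω')^α)} dω' ≤ C ω^{−η} e^{−βω^α}`
for all `ω > 0`. -/
theorem stmt_9
    (β α η : ℝ) (hβ : 0 < β) (hα0 : 0 < α) (hα1 : α < 1) (hη : 0 ≤ η) :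
    ∃ C : ℝ, 0 < C ∧ ∀ ω : ℝ, 0 < ω →
      (∫ ω' in Ioo (0:ℝ) (ω / 2),
          ω' * (ω - ω') ^ (-η) * Real.exp (-β * ((ω - ω') ^ α + ω' ^ α)))
        ≤ C * ω ^ (-η) * Real.exp (-β * ω ^ α) := by
  have hb : 0 < β * (1 - α) := mul_pos hβ (by linarith)
  set g : ℝ → ℝ := fun x => x * Real.exp (-(β * (1 - α)) * x ^ α) with hg
  have hgint : IntegrableOn g (Ioi 0) := integrableOn_mul_exp_neg_mul_rpow hα0 hb
  have hgnn : ∀ x ∈ Ioi (0:ℝ), 0 ≤ g x := fun x hx => mul_nonneg (le_of_lt hx) (exp_pos _).le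
  have hInn : 0 ≤ ∫ x in Ioi (0:ℝ), g x := setIntegral_nonneg measurableSet_Ioi hgnn
  -- The summand `1` only serves to make the constant positive without evaluating the integral.
  refine ⟨2 ^ η * ((∫ x in Ioi (0:ℝ), g x) + 1), by positivity, fun ω hω => ?_⟩
  set K : ℝ := 2 ^ η * ω ^ (-η) * Real.exp (-β * ω ^ α) with hK
  have hKpos : 0 < K := by positivity
  have hsub : Ioo (0:ℝ) (ω / 2) ⊆ Ioi 0 := fun x hx => hx.1
  have hpt : ∀ x ∈ Ioo (0:ℝ) (ω / 2),
      x * (ω - x) ^ (-η) * Real.exp (-β * ((ω - x) ^ α + x ^ α)) ≤ K * g x := by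
    rintro x ⟨hx0, hx⟩
    have hpow : (ω - x) ^ (-η) ≤ 2 ^ η * ω ^ (-η) := by
      calc (ω - x) ^ (-η) ≤ (ω / 2) ^ (-η) :=
            Real.rpow_le_rpow_of_nonpos (by positivity) (by linarith) (by linarith)
        _ = 2 ^ η * ω ^ (-η) := by
            rw [Real.div_rpow hω.le (by norm_num), Real.rpow_neg (by norm_num : (0:ℝ) ≤ 2),
              div_inv_eq_mul, mul_comm]
    have hexp : Real.exp (-β * ((ω - x) ^ α + x ^ α))
        ≤ Real.exp (-β * ω ^ α) * Real.exp (-(β * (1 - α)) * x ^ α) := by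
      rw [← Real.exp_add]
      apply Real.exp_le_exp.2
      have h := rpow_add_le_of_le_s9 hα0 hα1 hx0 (show x ≤ ω - x by linarith)
      rw [add_sub_cancel] at h
      nlinarith [mul_le_mul_of_nonneg_left h hβ.le]
    calc x * (ω - x) ^ (-η) * Real.exp (-β * ((ω - x) ^ α + x ^ α))
        ≤ x * (2 ^ η * ω ^ (-η)) *
          (Real.exp (-β * ω ^ α) * Real.exp (-(β * (1 - α)) * x ^ α)) := by gcongr
      _ = K * g x := by simp only [hK, hg]; ring
  calc (∫ x in Ioo (0:ℝ) (ω / 2),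
          x * (ω - x) ^ (-η) * Real.exp (-β * ((ω - x) ^ α + x ^ α)))
      ≤ ∫ x in Ioo (0:ℝ) (ω / 2), K * g x := by
        refine integral_mono_of_nonneg ?_ ((hgint.mono_set hsub).const_mul K) ?_
        · filter_upwards [ae_restrict_mem measurableSet_Ioo] with x hx
          have h1 : 0 < x := hx.1
          have h2 : 0 < ω - x := by linarith [hx.2]
          positivity
        · filter_upwards [ae_restrict_mem measurableSet_Ioo] with x hx using hpt x hx
    _ = K * ∫ x in Ioo (0:ℝ) (ω / 2), g x := integral_const_mul _ _
    _ ≤ K * ((∫ x in Ioi (0:ℝ), g x) + 1) := by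
        gcongr
        have := setIntegral_mono_set hgint
          ((ae_restrict_mem measurableSet_Ioi).mono hgnn) hsub.eventuallyLE
        linarith
    _ = 2 ^ η * ((∫ x in Ioi (0:ℝ), g x) + 1) * ω ^ (-η) * Real.exp (-β * ω ^ α) := by
        simp only [hK]; ring
end

section
/- Let β > 0, 0 < α < 1, and let p ≥ 1 be a natural number. Let f̂ : ℝ → ℝ be a measurable function, and define the sequence of functions G_m on (0,∞)×(0,∞) recursively by G_0(ω,Ω) = f̂(ω+Ω) and G_{m+1}(ω,Ω) = ∫₀^∞ ξ^p f̂(Ω−ξ) G_m(ω,ξ) dξ. Suppose there are constants c ≥ A > 0 with A e^{−β|ω|^α} ≤ f̂(ω) ≤ c e^{−β|ω|^α} for all ω ∈ ℝ. Set B = A·Γ(1 + 1/α)/(2β)^{1/α}. Then for every natural number m and all ω, Ω > 0, G_m(ω,Ω) ≥ A B^m Ω^{mp} e^{−β(ω+Ω)^α}. -/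
/-!
The bound is proved by induction on `m`. In the recursion for `G (m + 1) ω Ω` only `ξ > Ω` is kept.
There, with `η = ξ - Ω`, subadditivity gives `(ω + ξ)^α ≤ (ω + Ω)^α + η^α`, and `ξ^((m+1)p)` is at
least `Ω^((m+1)p)`, so the integrand is at least a constant times `exp (-2β η^α)`. The integral of
the latter over `η > 0` is `Γ(1 + 1/α) / (2β)^(1/α)`, which supplies one more factor `B`.

Since the Bochner integral of a non-integrable function is `0`, this comparison needs the integrand
of the recursion to be integrable. This is obtained from an a priori statement
(`regular_iterate`): `G m ω` agrees on `(0, ∞)` with a measurable function of at most polynomial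
growth. Polynomial growth propagates through the recursion because
`1 + ξ ≤ (1 + Ω) (1 + |Ω - ξ|)` and every `(1 + |x|)^N exp (-β |x|^α)` is integrable.
-/

open MeasureTheory Real Set

/-- The weights `(1 + |x|)^N e^{-β|x|^α}`, which dominate the integrands of the recursion. -/
lemma integrable_weight (β α : ℝ) (hβ : 0 < β) (hα0 : 0 < α) (N : ℕ) :
    Integrable (fun x : ℝ => (1 + |x|) ^ N * Real.exp (-β * |x| ^ α)) := by
  have hIoi : IntegrableOn (fun x : ℝ => (1 + |x|) ^ N * Real.exp (-β * |x| ^ α)) (Ioi 0) := by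
    have hsum : IntegrableOn (fun x : ℝ => ∑ k ∈ Finset.range (N + 1),
        (N.choose k : ℝ) * (x ^ (k : ℝ) * Real.exp (-β * x ^ α))) (Ioi 0) := by
      refine integrable_finsetSum _ fun k _ => Integrable.const_mul ?_ _
      exact integrableOn_rpow_mul_exp_neg_mul_rpow
        (by have : (0 : ℝ) ≤ k := k.cast_nonneg
            linarith) hα0 hβ
    refine hsum.congr_fun (fun x hx => ?_) measurableSet_Ioi
    have hx' : (0 : ℝ) < x := hx
    simp only [abs_of_pos hx']
    rw [add_comm 1 x, add_pow, Finset.sum_mul]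
    refine Finset.sum_congr rfl fun k _ => ?_
    rw [Real.rpow_natCast]
    ring
  have hIio : IntegrableOn (fun x : ℝ => (1 + |x|) ^ N * Real.exp (-β * |x| ^ α)) (Iio 0) := by
    rw [← (Measure.measurePreserving_neg (volume : Measure ℝ)).integrableOn_comp_preimage
      (Homeomorph.neg ℝ).measurableEmbedding]
    simpa [Function.comp_def] using hIoi
  rw [← integrableOn_univ, ← @Iio_union_Ici _ _ (0 : ℝ), integrableOn_union,
    integrableOn_Ici_iff_integrableOn_Ioi]
  exact ⟨hIio, hIoi⟩

/-- `g` is measurable, and on `(0, ∞)` it is nonnegative and bounded by a polynomial. -/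
def Tempered (g : ℝ → ℝ) : Prop :=
  Measurable g ∧ ∃ C : ℝ, ∃ N : ℕ, 0 ≤ C ∧ ∀ ξ : ℝ, 0 < ξ → 0 ≤ g ξ ∧ g ξ ≤ C * (1 + ξ) ^ N

section Step

variable {β α c : ℝ} {fhat g : ℝ → ℝ}

/-- Pointwise domination of the integrand of the recursion; the dependence on `Ω` is polynomial. -/
lemma integrand_le (hc : 0 ≤ c) (hf0 : ∀ x, 0 ≤ fhat x)
    (hfu : ∀ x : ℝ, fhat x ≤ c * Real.exp (-β * |x| ^ α)) (p : ℕ) {C : ℝ} {N : ℕ} (hC : 0 ≤ C)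
    (hg : ∀ ξ : ℝ, 0 < ξ → 0 ≤ g ξ ∧ g ξ ≤ C * (1 + ξ) ^ N)
    {Ω ξ : ℝ} (hΩ : 0 < Ω) (hξ : 0 < ξ) :
    ξ ^ p * fhat (Ω - ξ) * g ξ ≤ c * C * (1 + Ω) ^ (p + N) *
      ((1 + |Ω - ξ|) ^ (p + N) * Real.exp (-β * |Ω - ξ| ^ α)) := by
  have hbase : 1 + ξ ≤ (1 + Ω) * (1 + |Ω - ξ|) := by
    nlinarith [neg_abs_le (Ω - ξ), abs_nonneg (Ω - ξ)]
  calc ξ ^ p * fhat (Ω - ξ) * g ξ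
      ≤ (1 + ξ) ^ p * (c * Real.exp (-β * |Ω - ξ| ^ α)) * (C * (1 + ξ) ^ N) := by
        have h1 := hf0 (Ω - ξ)
        have h2 := (hg ξ hξ).1
        gcongr
        · linarith
        · exact hfu _
        · exact (hg ξ hξ).2
    _ = c * C * (1 + ξ) ^ (p + N) * Real.exp (-β * |Ω - ξ| ^ α) := by ring
    _ ≤ c * C * ((1 + Ω) * (1 + |Ω - ξ|)) ^ (p + N) * Real.exp (-β * |Ω - ξ| ^ α) := by
        gcongr
    _ = _ := by rw [mul_pow]; ring

lemma integrableOn_integrand (hβ : 0 < β) (hα0 : 0 < α) (hmeas : Measurable fhat)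
    (hc : 0 ≤ c) (hf0 : ∀ x, 0 ≤ fhat x)
    (hfu : ∀ x : ℝ, fhat x ≤ c * Real.exp (-β * |x| ^ α)) (p : ℕ) (hg : Tempered g)
    {Ω : ℝ} (hΩ : 0 < Ω) :
    IntegrableOn (fun ξ => ξ ^ p * fhat (Ω - ξ) * g ξ) (Ioi 0) := by
  obtain ⟨hgm, C, N, hC, hgb⟩ := hg
  have hdom := (((integrable_weight β α hβ hα0 (p + N)).comp_sub_left Ω).const_mul
    (c * C * (1 + Ω) ^ (p + N))).integrableOn (s := Ioi 0)
  refine Integrable.mono' hdom (by fun_prop) ?_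
  filter_upwards [ae_restrict_mem measurableSet_Ioi] with ξ hξ
  have hξ' : (0 : ℝ) < ξ := hξ
  have h1 := hf0 (Ω - ξ)
  have h2 := (hgb ξ hξ').1
  rw [Real.norm_of_nonneg (by positivity)]
  exact integrand_le hc hf0 hfu p hC hgb hΩ hξ'

lemma Tempered.step (hβ : 0 < β) (hα0 : 0 < α) (hmeas : Measurable fhat)
    (hc : 0 ≤ c) (hf0 : ∀ x, 0 ≤ fhat x)
    (hfu : ∀ x : ℝ, fhat x ≤ c * Real.exp (-β * |x| ^ α)) (p : ℕ) (hg : Tempered g) :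
    Tempered (fun Ω => ∫ ξ in Ioi (0:ℝ), ξ ^ p * fhat (Ω - ξ) * g ξ) := by
  have hint := fun {Ω : ℝ} (hΩ : 0 < Ω) =>
    integrableOn_integrand hβ hα0 hmeas hc hf0 hfu p hg hΩ
  obtain ⟨hgm, C, N, hC, hgb⟩ := hg
  have hm : Measurable (fun z : ℝ × ℝ => z.2 ^ p * fhat (z.1 - z.2) * g z.2) := by fun_prop
  have hK : 0 ≤ ∫ x : ℝ, (1 + |x|) ^ (p + N) * Real.exp (-β * |x| ^ α) :=
    integral_nonneg fun x => by positivity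
  refine ⟨(hm.stronglyMeasurable.integral_prod_right' (ν := volume.restrict (Ioi 0))).measurable,
    c * C * ∫ x : ℝ, (1 + |x|) ^ (p + N) * Real.exp (-β * |x| ^ α), p + N, by positivity,
    fun Ω hΩ => ⟨?_, ?_⟩⟩
  · refine setIntegral_nonneg measurableSet_Ioi fun ξ hξ => ?_
    have hξ' : (0 : ℝ) < ξ := hξ
    have h1 := hf0 (Ω - ξ)
    have h2 := (hgb ξ hξ').1
    positivity
  · have hdom := ((integrable_weight β α hβ hα0 (p + N)).comp_sub_left Ω).const_mul
      (c * C * (1 + Ω) ^ (p + N))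
    calc ∫ ξ in Ioi (0:ℝ), ξ ^ p * fhat (Ω - ξ) * g ξ
        ≤ ∫ ξ in Ioi (0:ℝ), c * C * (1 + Ω) ^ (p + N) *
            ((1 + |Ω - ξ|) ^ (p + N) * Real.exp (-β * |Ω - ξ| ^ α)) :=
          setIntegral_mono_on (hint hΩ) hdom.integrableOn measurableSet_Ioi
            fun ξ hξ => integrand_le hc hf0 hfu p hC hgb hΩ hξ
      _ ≤ ∫ ξ : ℝ, c * C * (1 + Ω) ^ (p + N) *
            ((1 + |Ω - ξ|) ^ (p + N) * Real.exp (-β * |Ω - ξ| ^ α)) :=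
          setIntegral_le_integral hdom (Filter.Eventually.of_forall fun ξ => by
            dsimp only [Pi.zero_apply]; positivity)
      _ = _ := by
          rw [integral_const_mul, integral_sub_left_eq_self
            (fun x : ℝ => (1 + |x|) ^ (p + N) * Real.exp (-β * |x| ^ α)) volume Ω]
          ring

end Step

/-- The recursion determines `G m ω` only on `(0, ∞)`, so measurability is stated for a
function `g` agreeing with it there. -/
lemma regular_iterate {β α c : ℝ} (hβ : 0 < β) (hα0 : 0 < α) (p : ℕ)
    {fhat : ℝ → ℝ} (hmeas : Measurable fhat) {G : ℕ → ℝ → ℝ → ℝ}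
    (hG0 : ∀ ω Ω : ℝ, 0 < ω → 0 < Ω → G 0 ω Ω = fhat (ω + Ω))
    (hGrec : ∀ (m : ℕ) (ω Ω : ℝ), 0 < ω → 0 < Ω →
      G (m + 1) ω Ω = ∫ ξ in Ioi (0:ℝ), ξ ^ p * fhat (Ω - ξ) * G m ω ξ)
    (hc : 0 ≤ c) (hf0 : ∀ x, 0 ≤ fhat x)
    (hfu : ∀ x : ℝ, fhat x ≤ c * Real.exp (-β * |x| ^ α)) {ω : ℝ} (hω : 0 < ω) (m : ℕ) :
    ∃ g : ℝ → ℝ, Tempered g ∧ ∀ ξ : ℝ, 0 < ξ → G m ω ξ = g ξ := by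
  induction m with
  | zero =>
    refine ⟨fun ξ => fhat (ω + ξ), ⟨by fun_prop, c, 0, hc, fun ξ _ => ⟨hf0 _, ?_⟩⟩,
      fun ξ hξ => hG0 ω ξ hω hξ⟩
    have hexp : Real.exp (-β * |ω + ξ| ^ α) ≤ 1 := by
      rw [Real.exp_le_one_iff]
      have : 0 ≤ β * |ω + ξ| ^ α := by positivity
      linarith
    simpa using (hfu (ω + ξ)).trans (mul_le_of_le_one_right hc hexp)
  | succ m ih =>
    obtain ⟨g, hg, hGg⟩ := ih
    refine ⟨_, hg.step hβ hα0 hmeas hc hf0 hfu p, fun Ω hΩ => ?_⟩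
    rw [hGrec m ω Ω hω hΩ]
    refine setIntegral_congr_fun measurableSet_Ioi fun ξ hξ => ?_
    simp only [hGg ξ hξ]

/-- Lower bound for the product of the two exponentials in the recursion, at `ξ = Ω + η`. -/
lemma exp_split {β α ω Ω η : ℝ} (hβ : 0 < β) (hα0 : 0 < α) (hα1 : α < 1)
    (hω : 0 < ω) (hΩ : 0 < Ω) (hη : 0 < η) :
    Real.exp (-β * (ω + Ω) ^ α) * Real.exp (-(2 * β) * η ^ α) ≤
      Real.exp (-β * η ^ α) * Real.exp (-β * (ω + (Ω + η)) ^ α) := by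
  rw [← Real.exp_add, ← Real.exp_add, Real.exp_le_exp]
  have h := Real.rpow_add_le_add_rpow (add_pos hω hΩ).le hη.le hα0.le hα1.le
  rw [add_assoc] at h
  nlinarith

/-- Rough lower bound on the iterated integrals `G_m`: if
`A e^{−β|ω|^α} ≤ f̂(ω) ≤ c e^{−β|ω|^α}`, then with `B = A Γ(1+1/α)/(2β)^{1/α}` one has
`G_m(ω,Ω) ≥ A B^m Ω^{mp} e^{−β(ω+Ω)^α}` for all `ω, Ω > 0`. -/
theorem stmt_15
    (β α : ℝ) (hβ : 0 < β) (hα0 : 0 < α) (hα1 : α < 1)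
    (p : ℕ) (hp : 1 ≤ p)
    (fhat : ℝ → ℝ) (hmeas : Measurable fhat)
    (G : ℕ → ℝ → ℝ → ℝ)
    (hG0 : ∀ ω Ω : ℝ, 0 < ω → 0 < Ω → G 0 ω Ω = fhat (ω + Ω))
    (hGrec : ∀ (m : ℕ) (ω Ω : ℝ), 0 < ω → 0 < Ω →
      G (m + 1) ω Ω = ∫ ξ in Ioi (0:ℝ), ξ ^ p * fhat (Ω - ξ) * G m ω ξ)
    (c A : ℝ) (hA : 0 < A) (hcA : A ≤ c)
    (hfl : ∀ ω : ℝ, A * Real.exp (-β * |ω| ^ α) ≤ fhat ω)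
    (hfu : ∀ ω : ℝ, fhat ω ≤ c * Real.exp (-β * |ω| ^ α)) :
    ∀ m : ℕ, ∀ ω Ω : ℝ, 0 < ω → 0 < Ω →
      A * (A * Real.Gamma (1 + 1 / α) / (2 * β) ^ (1 / α)) ^ m * Ω ^ (m * p) *
          Real.exp (-β * (ω + Ω) ^ α)
        ≤ G m ω Ω := by
  have hf0 : ∀ x, 0 ≤ fhat x := fun x => le_trans (by positivity) (hfl x)
  have hc : 0 ≤ c := hA.le.trans hcA
  intro m
  induction m with
  | zero =>
    intro ω Ω hω hΩ
    rw [hG0 ω Ω hω hΩ]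
    simpa [abs_of_pos (add_pos hω hΩ)] using hfl (ω + Ω)
  | succ m ih =>
    intro ω Ω hω hΩ
    have hΓ : 0 < Real.Gamma (1 + 1 / α) := Real.Gamma_pos_of_pos (by positivity)
    set B := A * Real.Gamma (1 + 1 / α) / (2 * β) ^ (1 / α) with hB
    have hB0 : 0 < B := by positivity
    obtain ⟨g, hg, hGg⟩ := regular_iterate hβ hα0 p hmeas hG0 hGrec hc hf0 hfu hω m
    have hint : IntegrableOn (fun ξ => ξ ^ p * fhat (Ω - ξ) * G m ω ξ) (Ioi 0) :=
      (integrableOn_integrand hβ hα0 hmeas hc hf0 hfu p hg hΩ).congr_fun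
        (fun ξ hξ => by simp only [hGg ξ hξ]) measurableSet_Ioi
    -- The minorant is extended by zero to all of `ℝ`, so that it can be translated freely.
    set F : ℝ → ℝ := (Ioi 0).indicator fun η => Real.exp (-(2 * β) * η ^ α) with hF
    have hFint : Integrable F := by
      rw [hF, integrable_indicator_iff measurableSet_Ioi]
      simpa using integrableOn_rpow_mul_exp_neg_mul_rpow (s := 0) (p := α) (b := 2 * β)
        (by norm_num) hα0 (by positivity)
    have hFval : A * ∫ η, F η = B := by
      rw [hF, integral_indicator measurableSet_Ioi, hB,
        integral_exp_neg_mul_rpow hα0 (by positivity), add_comm (1 / α) 1, neg_div,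
        Real.rpow_neg (by positivity)]
      ring
    set K := A * A * B ^ m * Ω ^ ((m + 1) * p) * Real.exp (-β * (ω + Ω) ^ α) with hK
    have hpt : ∀ ξ, K * F (ξ - Ω) ≤
        (Ioi (0:ℝ)).indicator (fun ξ => ξ ^ p * fhat (Ω - ξ) * G m ω ξ) ξ := by
      intro ξ
      rcases lt_or_ge Ω ξ with h | h
      · have hξ : 0 < ξ := hΩ.trans h
        have hη : 0 < ξ - Ω := sub_pos.mpr h
        rw [hF, indicator_of_mem (mem_Ioi.mpr hη), indicator_of_mem (mem_Ioi.mpr hξ)]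
        have hs := exp_split hβ hα0 hα1 hω hΩ hη
        rw [add_sub_cancel] at hs
        have h1 := hfl (Ω - ξ)
        rw [abs_sub_comm, abs_of_pos hη] at h1
        calc K * Real.exp (-(2 * β) * (ξ - Ω) ^ α)
            = A * A * B ^ m * Ω ^ ((m + 1) * p) *
              (Real.exp (-β * (ω + Ω) ^ α) * Real.exp (-(2 * β) * (ξ - Ω) ^ α)) := by
              rw [hK]; ring
          _ ≤ A * A * B ^ m * ξ ^ ((m + 1) * p) *
              (Real.exp (-β * (ξ - Ω) ^ α) * Real.exp (-β * (ω + ξ) ^ α)) := by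
              gcongr
          _ = ξ ^ p * (A * Real.exp (-β * (ξ - Ω) ^ α)) *
              (A * B ^ m * ξ ^ (m * p) * Real.exp (-β * (ω + ξ) ^ α)) := by
              rw [add_mul, pow_add, one_mul]; ring
          _ ≤ ξ ^ p * fhat (Ω - ξ) * G m ω ξ := by
              have h2 := hf0 (Ω - ξ)
              gcongr
              exact ih ω ξ hω hξ
      · rw [hF, indicator_of_notMem (by simpa using h), mul_zero]
        refine indicator_nonneg (fun ξ hξ => ?_) ξ
        have hξ' : (0 : ℝ) < ξ := hξ
        have h2 := hf0 (Ω - ξ)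
        have h3 : 0 ≤ G m ω ξ := le_trans (by positivity) (ih ω ξ hω hξ')
        positivity
    calc A * B ^ (m + 1) * Ω ^ ((m + 1) * p) * Real.exp (-β * (ω + Ω) ^ α)
        = K * ∫ η, F η := by
          rw [hK, pow_succ, ← hFval]; ring
      _ = ∫ ξ, K * F (ξ - Ω) := by
          rw [integral_const_mul, integral_sub_right_eq_self F Ω]
      _ ≤ ∫ ξ, (Ioi (0:ℝ)).indicator (fun ξ => ξ ^ p * fhat (Ω - ξ) * G m ω ξ) ξ :=
          integral_mono ((hFint.comp_sub_right Ω).const_mul K)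
            ((integrable_indicator_iff measurableSet_Ioi).mpr hint) hpt
      _ = G (m + 1) ω Ω := by
          rw [integral_indicator measurableSet_Ioi, hGrec m ω Ω hω hΩ]
end

section
/- Let f : ℝ → ℂ be a smooth function with compact support and let f̂(ω) = ∫_{−∞}^∞ f(t) e^{−iωt} dt be its Fourier transform. If there exist constants A > 0 and a > 0 such that |f̂(ω)| ≤ A e^{−a|ω|} for all ω ∈ ℝ, then f vanishes identically. -/
open MeasureTheory Real Set

/-!
Up to the rescaling `ω = 2πv`, write `g = 𝓕 f`, so that `‖g v‖ ≤ A e^{-2πa|v|}`. The function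
`F z = ∫ e^{2πizv} g(v) dv` is then holomorphic in the strip `|Im z| < a`
(`differentiableAt_expIntegral`, by differentiation under the integral sign), and by Fourier
inversion it agrees with `f` on the real line. Since `f` vanishes on a half-line, the zeros of `F`
accumulate in the (connected) strip, so `F = 0` there, and hence `f = 0`.
-/

lemma integrable_exp_neg_mul_abs {c : ℝ} (hc : 0 < c) :
    Integrable (fun v : ℝ => Real.exp (-c * |v|)) := by
  rw [← integrableOn_univ, ← Iic_union_Ioi (a := (0 : ℝ))]
  refine IntegrableOn.union ?_ ?_
  · refine (integrableOn_exp_mul_Iic hc 0).congr_fun (fun v hv => ?_) measurableSet_Iic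
    simp only [abs_of_nonpos (mem_Iic.1 hv), neg_mul_neg]
  · refine (integrableOn_exp_mul_Ioi (neg_lt_zero.2 hc) 0).congr_fun (fun v hv => ?_)
      measurableSet_Ioi
    simp only [abs_of_pos (mem_Ioi.1 hv)]

lemma norm_cexp_two_pi_le {z : ℂ} {b : ℝ} (hz : |z.im| ≤ b) (v : ℝ) :
    ‖Complex.exp (2 * π * v * Complex.I * z)‖ ≤ Real.exp (2 * π * b * |v|) := by
  rw [Complex.norm_exp, Real.exp_le_exp]
  have h : (2 * π * v * Complex.I * z).re = 2 * π * (-(v * z.im)) := by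
    simp [Complex.mul_re, Complex.mul_im]
    ring
  rw [h, mul_assoc (2 * π) b]
  refine mul_le_mul_of_nonneg_left ?_ (by positivity)
  calc -(v * z.im) ≤ |v * z.im| := neg_le_abs _
    _ = |z.im| * |v| := by rw [abs_mul, mul_comm]
    _ ≤ b * |v| := by gcongr

lemma differentiableAt_expIntegral {g : ℝ → ℂ} (hg : Continuous g) {A a : ℝ}
    (hdecay : ∀ v, ‖g v‖ ≤ A * Real.exp (-(2 * π * a) * |v|)) {z₀ : ℂ} (hz₀ : |z₀.im| < a) :
    DifferentiableAt ℂ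
      (fun z : ℂ => ∫ v : ℝ, Complex.exp (2 * π * v * Complex.I * z) * g v) z₀ := by
  obtain ⟨b, hzb, hba⟩ := exists_between hz₀
  -- For `|Im z| ≤ b` the integrand decays like `e^{-2c|v|}`; half of this rate pays for the factor
  -- `v` produced by differentiation in `z`.
  set c : ℝ := π * (a - b) with hc_def
  have hc : 0 < c := mul_pos pi_pos (sub_pos.2 hba)
  have hA : 0 ≤ A := by simpa using (norm_nonneg _).trans (hdecay 0)
  have key : ∀ z : ℂ, |z.im| ≤ b → ∀ v : ℝ,
      ‖Complex.exp (2 * π * v * Complex.I * z) * g v‖ ≤ A * Real.exp (-(2 * c) * |v|) := by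
    intro z hz v
    rw [norm_mul]
    calc _ ≤ Real.exp (2 * π * b * |v|) * (A * Real.exp (-(2 * π * a) * |v|)) := by
          gcongr
          exacts [norm_cexp_two_pi_le hz v, hdecay v]
      _ = A * Real.exp (-(2 * c) * |v|) := by
          rw [mul_left_comm, ← Real.exp_add, hc_def]
          ring_nf
  have hs : {z : ℂ | |z.im| < b} ∈ nhds z₀ :=
    (isOpen_lt (by fun_prop) continuous_const).mem_nhds hzb
  refine (hasDerivAt_integral_of_dominated_loc_of_deriv_le (μ := volume)
    (F' := fun z v => 2 * π * v * Complex.I * (Complex.exp (2 * π * v * Complex.I * z) * g v))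
    (bound := fun v => 2 * π * A / c * Real.exp (-c * |v|)) hs ?_ ?_ ?_ ?_ ?_ ?_).2.differentiableAt
  · exact .of_forall fun z => (by fun_prop : Continuous _).aestronglyMeasurable
  · exact ((integrable_exp_neg_mul_abs (by positivity : 0 < 2 * c)).const_mul A).mono'
      (by fun_prop : Continuous _).aestronglyMeasurable (.of_forall (key z₀ hzb.le))
  · exact (by fun_prop : Continuous _).aestronglyMeasurable
  · refine .of_forall fun v z hz => ?_
    have h1 : ‖(2 * π * v * Complex.I : ℂ)‖ = 2 * π * |v| := by
      simp [abs_of_pos pi_pos]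
    have h2 : |v| ≤ Real.exp (c * |v|) / c := by
      rw [le_div_iff₀ hc]
      nlinarith [Real.add_one_le_exp (c * |v|)]
    rw [norm_mul, h1]
    calc _ ≤ 2 * π * (Real.exp (c * |v|) / c) * (A * Real.exp (-(2 * c) * |v|)) := by
          gcongr
          exact key z (le_of_lt hz) v
      _ = 2 * π * A / c * (Real.exp (c * |v|) * Real.exp (-(2 * c) * |v|)) := by ring
      _ = _ := by
          rw [← Real.exp_add]
          ring_nf
  · exact (integrable_exp_neg_mul_abs hc).const_mul _
  · refine .of_forall fun v z _ => ?_
    have := (((hasDerivAt_id z).const_mul (2 * π * v * Complex.I : ℂ)).cexp).mul_const (g v)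
    refine this.congr_deriv ?_
    simp only [id]
    ring

open FourierTransform in
/-- A smooth compactly supported function whose Fourier transform decays exponentially,
`|f̂(ω)| ≤ A e^{−a|ω|}`, vanishes identically. -/
theorem stmt_17
    (f : ℝ → ℂ) (hf : ContDiff ℝ (⊤ : ℕ∞) f) (hsupp : HasCompactSupport f)
    (A a : ℝ) (hA : 0 < A) (ha : 0 < a)
    (hdecay : ∀ ω : ℝ,
      ‖∫ t : ℝ, f t * Complex.exp (-(((ω * t : ℝ) : ℂ) * Complex.I))‖
        ≤ A * Real.exp (-a * |ω|)) :
    ∀ t : ℝ, f t = 0 := by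
  have hfi : Integrable f := hf.continuous.integrable_of_hasCompactSupport hsupp
  have hgc : Continuous (𝓕 f) :=
    VectorFourier.fourierIntegral_continuous Real.continuous_fourierChar
      (L := innerₗ ℝ) continuous_inner hfi
  have hg : ∀ v, ‖𝓕 f v‖ ≤ A * Real.exp (-(2 * π * a) * |v|) := by
    intro v
    have h := hdecay (2 * π * v)
    rw [abs_mul, abs_of_pos two_pi_pos] at h
    rw [Real.fourier_real_eq_integral_exp_smul]
    convert h using 2
    · congr 1
      ext t
      rw [smul_eq_mul, mul_comm]
      congr 2
      push_cast
      ring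
    · ring_nf
  have hgi : Integrable (𝓕 f) :=
    ((integrable_exp_neg_mul_abs (by positivity : 0 < 2 * π * a)).const_mul A).mono'
      hgc.aestronglyMeasurable (.of_forall hg)
  set F : ℂ → ℂ := fun z => ∫ v : ℝ, Complex.exp (2 * π * v * Complex.I * z) * 𝓕 f v with hF
  have hFf : ∀ t : ℝ, F t = f t := by
    intro t
    rw [← congrFun (hf.continuous.fourierInv_fourier_eq hfi hgi) t, Real.fourierInv_eq']
    simp only [hF]
    congr 1
    ext v
    rw [smul_eq_mul]
    congr 2
    simp
    ring
  set U : Set ℂ := {z | |z.im| < a} with hU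
  have hUo : IsOpen U := isOpen_lt (by fun_prop) continuous_const
  have hUc : Convex ℝ U := by
    have : U = Complex.imLm ⁻¹' Ioo (-a) a := by
      ext z
      simp [hU, abs_lt]
    rw [this]
    exact (convex_Ioo _ _).linear_preimage _
  have hFU : DifferentiableOn ℂ F U := fun z hz =>
    (differentiableAt_expIntegral hgc hg hz).differentiableWithinAt
  have hreal : ∀ t : ℝ, (t : ℂ) ∈ U := fun t => by simpa [hU] using ha
  -- `f` vanishes to the right of some point `R`.
  obtain ⟨R, hR⟩ : ∃ R : ℝ, ∀ t, R < t → f t = 0 := by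
    obtain ⟨R, hR⟩ := hsupp.isCompact.bddAbove
    exact ⟨R, fun t ht => image_eq_zero_of_notMem_tsupport fun h => ht.not_ge (hR h)⟩
  have hfreq : ∃ᶠ z in nhdsWithin ((R : ℝ) : ℂ) {((R : ℝ) : ℂ)}ᶜ, F z = 0 := by
    have htend : Filter.Tendsto (fun t : ℝ => (t : ℂ)) (nhdsWithin R (Ioi R))
        (nhdsWithin ((R : ℝ) : ℂ) {((R : ℝ) : ℂ)}ᶜ) := by
      refine tendsto_nhdsWithin_iff.2
        ⟨(Complex.continuous_ofReal.tendsto R).mono_left nhdsWithin_le_nhds, ?_⟩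
      filter_upwards [self_mem_nhdsWithin] with t ht
      simpa using (mem_Ioi.1 ht).ne'
    refine htend.frequently (Filter.Eventually.frequently ?_)
    filter_upwards [self_mem_nhdsWithin] with t ht
    rw [hFf, hR t ht]
  have hzero := (hFU.analyticOnNhd hUo).eqOn_zero_of_preconnected_of_frequently_eq_zero
    hUc.isPreconnected (hreal R) hfreq
  intro t
  rw [← hFf t]
  exact hzero (hreal t)
end
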